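/- arXiv:1907.02655 — 2 statements merged into one kernel-verified Lean document; each statement's English description precedes it below -/
import Mathlib

section
/- Fix an integer N ≥ 4 and constants γ, μ ∈ (0,1/2). There is a constant C = C(N,γ,μ) > 0 with the following property. Let T > 0, ε > 0 and let φ : ℝ³ × [0,T) → ℝ be smooth with φ(·,t) Schwartz in x for each t, and suppose that for every t ∈ [0,T): Σ_{|I| ≤ N} ‖ √(w(|·| − t)) · |∂ Z^I φ|(·,t) ‖_{L²(ℝ³)} ≤ ε, the sum ranging over all products Z^I of at most N vector fields from 𝔏. Then for every multi-index I with |I| ≤ N − 3 and every (x,t) ∈ ℝ³ × [0,T), setting q := |x| − t: |∂ Z^I φ(x,t)| ≤ C ε (1 + t + |q|)^{-1} (1 + |q|)^{-1-γ} if q > 0, and |∂ Z^I φ(x,t)| ≤ C ε (1 + t + |q|)^{-1} (1 + |q|)^{-1/2} if q < 0. -/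
open MeasureTheory

/-- Operators on functions on `ℝ⁴` (coordinates `(x⁰,x¹,x²,x³) = (t,x)`). -/
abbrev Op : Type := ((Fin 4 → ℝ) → ℝ) → ((Fin 4 → ℝ) → ℝ)

/-- The coordinate partial derivative `∂_α f` on `ℝ⁴`. -/
noncomputable def pd (α : Fin 4) : Op :=
  fun f x => fderiv ℝ f x (Pi.single α 1)

/-- Lowering of the coordinate `x^α` by the Minkowski metric: `x_0 = -x^0`, `x_i = x^i`. -/
def lowerCoord (α : Fin 4) (x : Fin 4 → ℝ) : ℝ :=
  if α = 0 then -x 0 else x α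

/-- The Lorentz rotation/boost field `Ω_{αβ} f = -x_α ∂_β f + x_β ∂_α f`. -/
noncomputable def rotField (α β : Fin 4) : Op :=
  fun f x => -lowerCoord α x * pd β f x + lowerCoord β x * pd α f x

/-- The scaling vector field `S̃ f = t ∂_t f + ∑ᵢ xⁱ ∂ᵢ f = ∑_α x^α ∂_α f`. -/
noncomputable def scalingField : Op :=
  fun f x => ∑ α : Fin 4, x α * pd α f x

/-- Index type for the family `𝔏`: 4 translations, the rotations/boosts `Ω_{αβ}` (`α < β`),
and the scaling field. -/
abbrev LIdx : Type := Fin 4 ⊕ ({p : Fin 4 × Fin 4 // p.1 < p.2} ⊕ Unit)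

/-- The field of the family `𝔏` corresponding to an index. -/
noncomputable def opOf : LIdx → Op
  | Sum.inl α => pd α
  | Sum.inr (Sum.inl p) => rotField p.1.1 p.1.2
  | Sum.inr (Sum.inr _) => scalingField

/-- The product `Z^I = Z_{ι 0} ∘ ⋯ ∘ Z_{ι (k-1)}` of fields of `𝔏`, applied to `φ`. -/
noncomputable def applyVec {k : ℕ} (ι : Fin k → LIdx) (φ : (Fin 4 → ℝ) → ℝ) :
    (Fin 4 → ℝ) → ℝ :=
  ((List.finRange k).map fun j => opOf (ι j)).foldr (fun T g => T g) φ

/-- The pointwise norm `|∂ g| = max_α |∂_α g|` of the space-time gradient. -/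
noncomputable def gradNorm (g : (Fin 4 → ℝ) → ℝ) (x : Fin 4 → ℝ) : ℝ :=
  Finset.univ.sup' Finset.univ_nonempty (fun α : Fin 4 => |pd α g x|)

/-- The weight `w(q)`: `1 + (1+|q|)^{1+2γ}` for `q ≥ 0` and `1 + (1+|q|)^{-2μ}` for `q < 0`. -/
noncomputable def wgt (γ μ q : ℝ) : ℝ :=
  if 0 ≤ q then 1 + (1 + |q|) ^ (1 + 2 * γ) else 1 + (1 + |q|) ^ (-(2 * μ))

/-- The point of `ℝ^{1+3}` with time coordinate `t` and space coordinate `y`. -/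
noncomputable def pt (t : ℝ) (y : EuclideanSpace ℝ (Fin 3)) : Fin 4 → ℝ :=
  Fin.cons t (fun i => y i)

lemma sm_pd {g : (Fin 4 → ℝ) → ℝ} (hg : ContDiff ℝ (⊤ : ℕ∞) g) (α : Fin 4) :
    ContDiff ℝ (⊤ : ℕ∞) (pd α g) := by
  unfold pd
  exact (hg.fderiv_right (m := ((⊤ : ℕ∞) : WithTop ℕ∞)) (by simp)).clm_apply contDiff_const

lemma sm_lower (α : Fin 4) : ContDiff ℝ (⊤ : ℕ∞) (lowerCoord α) := by
  unfold lowerCoord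
  split_ifs <;> fun_prop

lemma sm_op {g : (Fin 4 → ℝ) → ℝ} (hg : ContDiff ℝ (⊤ : ℕ∞) g) (Z : LIdx) :
    ContDiff ℝ (⊤ : ℕ∞) (opOf Z g) := by
  rcases Z with α | p | u
  · exact sm_pd hg α
  · have h1 := sm_pd hg p.1.1
    have h2 := sm_pd hg p.1.2
    have h3 := sm_lower p.1.1
    have h4 := sm_lower p.1.2
    exact (h3.neg.mul h2).add (h4.mul h1)
  · show ContDiff ℝ (⊤ : ℕ∞) (fun x : Fin 4 → ℝ => ∑ α : Fin 4, x α * pd α g x)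
    refine ContDiff.sum fun α _ => ?_
    exact (contDiff_apply ℝ ℝ α).mul (sm_pd hg α)

lemma applyVec_succ {k : ℕ} (ι : Fin (k + 1) → LIdx) (φ : (Fin 4 → ℝ) → ℝ) :
    applyVec ι φ = opOf (ι 0) (applyVec (fun j : Fin k => ι j.succ) φ) := by
  unfold applyVec
  rw [List.finRange_succ]
  simp [List.map_map, Function.comp_def]

lemma sm_vec {k : ℕ} (ι : Fin k → LIdx) {φ : (Fin 4 → ℝ) → ℝ} (hφ : ContDiff ℝ (⊤ : ℕ∞) φ) :
    ContDiff ℝ (⊤ : ℕ∞) (applyVec ι φ) := by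
  induction k with
  | zero => simpa [applyVec] using hφ
  | succ k ih =>
    rw [applyVec_succ]
    exact sm_op (ih _) _

lemma sm_diff {g : (Fin 4 → ℝ) → ℝ} (hg : ContDiff ℝ (⊤ : ℕ∞) g) (x : Fin 4 → ℝ) :
    DifferentiableAt ℝ g x := (hg.differentiable (by simp)) x

lemma pd_comm {g : (Fin 4 → ℝ) → ℝ} (hg : ContDiff ℝ (⊤ : ℕ∞) g) (α β : Fin 4) (x : Fin 4 → ℝ) :
    pd α (pd β g) x = pd β (pd α g) x := by
  have hd : DifferentiableAt ℝ (fderiv ℝ g) x :=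
    (hg.fderiv_right (m := ((⊤ : ℕ∞) : WithTop ℕ∞)) (by simp)).differentiable (by simp) x
  have key : ∀ a b : Fin 4, pd a (pd b g) x =
      fderiv ℝ (fderiv ℝ g) x (Pi.single a 1) (Pi.single b 1) := by
    intro a b
    unfold pd
    rw [fderiv_clm_apply hd (differentiableAt_const _)]
    simp
  rw [key, key]
  have := (hg.contDiffAt (x := x)).isSymmSndFDerivAt
    (by simp only [minSmoothness_of_isRCLikeNormedField]; exact WithTop.coe_le_coe.2 (OrderTop.le_top (2 : ℕ∞)))
  exact this.eq _ _

lemma pd_mul {f g : (Fin 4 → ℝ) → ℝ} {x : Fin 4 → ℝ} (hf : DifferentiableAt ℝ f x)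
    (hg : DifferentiableAt ℝ g x) (α : Fin 4) :
    pd α (fun y => f y * g y) x = f x * pd α g x + g x * pd α f x := by
  unfold pd
  rw [fderiv_fun_mul hf hg]
  simp

lemma pd_add {f g : (Fin 4 → ℝ) → ℝ} {x : Fin 4 → ℝ} (hf : DifferentiableAt ℝ f x)
    (hg : DifferentiableAt ℝ g x) (α : Fin 4) :
    pd α (fun y => f y + g y) x = pd α f x + pd α g x := by
  unfold pd
  rw [fderiv_fun_add hf hg]
  simp

lemma pd_coord (α β : Fin 4) (x : Fin 4 → ℝ) :
    pd α (fun y => y β) x = if α = β then 1 else 0 := by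
  unfold pd
  rw [(hasFDerivAt_apply (𝕜 := ℝ) (F' := fun _ : Fin 4 => ℝ) β x).fderiv]
  simp [Pi.single_apply, eq_comm]

lemma pd_neg_fun (f : (Fin 4 → ℝ) → ℝ) (x : Fin 4 → ℝ) (α : Fin 4) :
    pd α (fun y => - f y) x = - pd α f x := by
  unfold pd
  rw [fderiv_fun_neg]
  simp

lemma pd_lower (α β : Fin 4) (x : Fin 4 → ℝ) :
    pd α (lowerCoord β) x = if α = β then (if β = 0 then -1 else 1) else 0 := by
  by_cases hb : β = 0
  · have : lowerCoord β = fun y => - y 0 := by funext y; simp [lowerCoord, hb]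
    rw [this, pd_neg_fun, pd_coord]
    subst hb; by_cases h : α = 0 <;> simp [h]
  · have : lowerCoord β = fun y => y β := by funext y; simp [lowerCoord, hb]
    rw [this, pd_coord]
    simp [hb]

lemma abs_le_sumpd (g : (Fin 4 → ℝ) → ℝ) (x : Fin 4 → ℝ) (α : Fin 4) :
    |pd α g x| ≤ ∑ β, |pd β g x| :=
  Finset.single_le_sum (f := fun β => |pd β g x|) (fun _ _ => abs_nonneg _) (Finset.mem_univ α)

lemma comm_bound {g : (Fin 4 → ℝ) → ℝ} (hg : ContDiff ℝ (⊤ : ℕ∞) g) (Z : LIdx) (α : Fin 4)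
    (x : Fin 4 → ℝ) :
    |opOf Z (pd α g) x| ≤ |pd α (opOf Z g) x| + ∑ β, |pd β g x| := by
  have hs : 0 ≤ ∑ β, |pd β g x| := Finset.sum_nonneg fun _ _ => abs_nonneg _
  rcases Z with a | ⟨⟨a, b⟩, hab⟩ | u
  · show |pd a (pd α g) x| ≤ |pd α (pd a g) x| + _
    rw [pd_comm hg]; linarith
  · have hab' : a ≠ b := ne_of_lt hab
    show |rotField a b (pd α g) x| ≤ |pd α (rotField a b g) x| + _
    have e : pd α (rotField a b g) x = rotField a b (pd α g) x
        + (- pd α (lowerCoord a) x * pd b g x + pd α (lowerCoord b) x * pd a g x) := by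
      unfold rotField
      have d1 := sm_diff (sm_pd hg a) x
      have d2 := sm_diff (sm_pd hg b) x
      have d3 := sm_diff (sm_lower a) x
      have d4 := sm_diff (sm_lower b) x
      rw [pd_add (d3.fun_neg.fun_mul d2) (d4.fun_mul d1), pd_mul d3.fun_neg d2, pd_mul d4 d1, pd_neg_fun,
        pd_comm hg α a, pd_comm hg α b]
      ring
    have e2 : |- pd α (lowerCoord a) x * pd b g x + pd α (lowerCoord b) x * pd a g x| ≤
        ∑ β, |pd β g x| := by
      rw [pd_lower, pd_lower]
      have := abs_le_sumpd g x a
      have := abs_le_sumpd g x b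
      split_ifs <;> simp_all
    have : rotField a b (pd α g) x = pd α (rotField a b g) x -
      (- pd α (lowerCoord a) x * pd b g x + pd α (lowerCoord b) x * pd a g x) := by rw [e]; ring
    rw [this]
    exact (abs_sub _ _).trans (by gcongr)
  · show |scalingField (pd α g) x| ≤ |pd α (scalingField g) x| + _
    have e : pd α (scalingField g) x = scalingField (pd α g) x + pd α g x := by
      unfold scalingField
      have : pd α (fun x => ∑ β, x β * pd β g x) x = ∑ β, pd α (fun x => x β * pd β g x) x := by
        unfold pd
        rw [fderiv_fun_sum]
        · simp
        · intro i _
          exact (differentiableAt_apply i x).fun_mul (sm_diff (sm_pd hg i) x)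
      rw [this]
      have : ∀ β, pd α (fun x => x β * pd β g x) x = x β * pd β (pd α g) x +
          (if α = β then pd β g x else 0) := by
        intro β
        rw [pd_mul (differentiableAt_apply β x) (sm_diff (sm_pd hg β) x), pd_coord, pd_comm hg]
        simp
      simp only [this, Finset.sum_add_distrib]
      simp
    have : scalingField (pd α g) x = pd α (scalingField g) x - pd α g x := by rw [e]; ring
    rw [this]
    exact (abs_sub _ _).trans (by have := abs_le_sumpd g x α; gcongr)

/-- Sum of squares of the gradient components. -/
noncomputable def dsq (g : (Fin 4 → ℝ) → ℝ) (x : Fin 4 → ℝ) : ℝ := ∑ α, (pd α g x) ^ 2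

/-- Level `m` energy density. -/
noncomputable def enL (φ : (Fin 4 → ℝ) → ℝ) (m : ℕ) (x : Fin 4 → ℝ) : ℝ :=
  ∑ ι : Fin m → LIdx, dsq (applyVec ι φ) x

/-- Energy density up to level `k`. -/
noncomputable def enB (φ : (Fin 4 → ℝ) → ℝ) (k : ℕ) (x : Fin 4 → ℝ) : ℝ :=
  ∑ m ∈ Finset.range (k + 1), enL φ m x

lemma dsq_nonneg (g : (Fin 4 → ℝ) → ℝ) (x : Fin 4 → ℝ) : 0 ≤ dsq g x :=
  Finset.sum_nonneg fun _ _ => sq_nonneg _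

lemma enL_nonneg (φ : (Fin 4 → ℝ) → ℝ) (m : ℕ) (x : Fin 4 → ℝ) : 0 ≤ enL φ m x :=
  Finset.sum_nonneg fun _ _ => dsq_nonneg _ _

lemma enB_nonneg (φ : (Fin 4 → ℝ) → ℝ) (m : ℕ) (x : Fin 4 → ℝ) : 0 ≤ enB φ m x :=
  Finset.sum_nonneg fun _ _ => enL_nonneg _ _ _

lemma enB_succ (φ : (Fin 4 → ℝ) → ℝ) (m : ℕ) (x : Fin 4 → ℝ) :
    enB φ (m + 1) x = enB φ m x + enL φ (m + 1) x := Finset.sum_range_succ _ _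

lemma sm_dsq {g : (Fin 4 → ℝ) → ℝ} (hg : ContDiff ℝ (⊤ : ℕ∞) g) :
    ContDiff ℝ (⊤ : ℕ∞) (dsq g) := by
  unfold dsq
  exact ContDiff.sum fun α _ => (sm_pd hg α).pow 2

lemma sm_enL {φ : (Fin 4 → ℝ) → ℝ} (hφ : ContDiff ℝ (⊤ : ℕ∞) φ) (m : ℕ) :
    ContDiff ℝ (⊤ : ℕ∞) (enL φ m) := by
  unfold enL
  exact ContDiff.sum fun ι _ => sm_dsq (sm_vec ι hφ)

lemma sm_enB {φ : (Fin 4 → ℝ) → ℝ} (hφ : ContDiff ℝ (⊤ : ℕ∞) φ) (m : ℕ) :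
    ContDiff ℝ (⊤ : ℕ∞) (enB φ m) := by
  unfold enB
  exact ContDiff.sum fun ι _ => sm_enL hφ _

/-- The vector `v` at `x` is controlled by the fields of the family with constant `c`. -/
def Ctl (x v : Fin 4 → ℝ) (c : ℝ) : Prop :=
  ∀ h : (Fin 4 → ℝ) → ℝ, ContDiff ℝ (⊤ : ℕ∞) h →
    |fderiv ℝ h x v| ≤ c * ∑ Z : LIdx, |opOf Z h x|

lemma card_LIdx : Fintype.card LIdx = 11 := by decide

lemma dsq_deriv {g : (Fin 4 → ℝ) → ℝ} (hg : ContDiff ℝ (⊤ : ℕ∞) g) {x v : Fin 4 → ℝ} {c : ℝ}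
    (hc : 0 ≤ c) (hv : Ctl x v c) :
    |fderiv ℝ (dsq g) x v| ≤ c * (99 * dsq g x + ∑ Z : LIdx, dsq (opOf Z g) x) := by
  have e : fderiv ℝ (dsq g) x v = ∑ α, 2 * pd α g x * fderiv ℝ (pd α g) x v := by
    unfold dsq
    rw [fderiv_fun_sum (fun α _ => (sm_diff (sm_pd hg α) x).fun_pow 2)]
    rw [sum_apply]
    refine Finset.sum_congr rfl fun α _ => ?_
    rw [fderiv_fun_pow 2 (sm_diff (sm_pd hg α) x)]
    simp
  rw [e]
  have step : ∀ α, |2 * pd α g x * fderiv ℝ (pd α g) x v| ≤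
      c * (55 * (pd α g x) ^ 2 + 11 * dsq g x + ∑ Z : LIdx, (pd α (opOf Z g) x) ^ 2) := by
    intro α
    have h1 := hv _ (sm_pd hg α)
    have h2 : ∀ Z : LIdx, 2 * |pd α g x| * |opOf Z (pd α g) x| ≤
        5 * (pd α g x) ^ 2 + dsq g x + (pd α (opOf Z g) x) ^ 2 := by
      intro Z
      have h3 := comm_bound hg Z α x
      have h4 : 2 * |pd α g x| * |opOf Z (pd α g) x| ≤
          2 * |pd α g x| * |pd α (opOf Z g) x| + ∑ β, 2 * |pd α g x| * |pd β g x| := by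
        rw [← Finset.mul_sum, ← mul_add]
        gcongr
      have h5 : ∑ β, 2 * |pd α g x| * |pd β g x| ≤ ∑ β, ((pd α g x) ^ 2 + (pd β g x) ^ 2) := by
        refine Finset.sum_le_sum fun β _ => ?_
        rw [← sq_abs (pd α g x), ← sq_abs (pd β g x)]
        exact two_mul_le_add_sq _ _
      rw [Finset.sum_add_distrib] at h5
      have h6 : 2 * |pd α g x| * |pd α (opOf Z g) x| ≤ (pd α g x) ^ 2 + (pd α (opOf Z g) x) ^ 2 := by
        rw [← sq_abs (pd α g x), ← sq_abs (pd α (opOf Z g) x)]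
        exact two_mul_le_add_sq _ _
      simp at h5
      unfold dsq
      linarith
    calc |2 * pd α g x * fderiv ℝ (pd α g) x v| = 2 * |pd α g x| * |fderiv ℝ (pd α g) x v| := by
          rw [abs_mul, abs_mul]; simp
      _ ≤ 2 * |pd α g x| * (c * ∑ Z : LIdx, |opOf Z (pd α g) x|) := by gcongr
      _ = c * ∑ Z : LIdx, 2 * |pd α g x| * |opOf Z (pd α g) x| := by
          rw [← Finset.mul_sum]; ring
      _ ≤ c * ∑ Z : LIdx, (5 * (pd α g x) ^ 2 + dsq g x + (pd α (opOf Z g) x) ^ 2) := by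
          gcongr with Z; exact h2 Z
      _ = _ := by
          rw [Finset.sum_add_distrib, Finset.sum_const, Finset.card_univ, card_LIdx]
          simp only [nsmul_eq_mul]; push_cast; ring
  calc _ ≤ ∑ α, |2 * pd α g x * fderiv ℝ (pd α g) x v| := Finset.abs_sum_le_sum_abs _ _
    _ ≤ ∑ α, c * (55 * (pd α g x) ^ 2 + 11 * dsq g x + ∑ Z : LIdx, (pd α (opOf Z g) x) ^ 2) :=
        Finset.sum_le_sum fun α _ => step α
    _ = _ := by
        rw [← Finset.mul_sum, Finset.sum_add_distrib, Finset.sum_add_distrib, ← Finset.mul_sum,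
          Finset.sum_comm]
        unfold dsq
        simp
        ring_nf
        tauto

lemma enL_succ (φ : (Fin 4 → ℝ) → ℝ) (m : ℕ) (x : Fin 4 → ℝ) :
    enL φ (m + 1) x = ∑ ι : Fin m → LIdx, ∑ Z : LIdx, dsq (opOf Z (applyVec ι φ)) x := by
  unfold enL
  rw [Finset.sum_comm, ← (Fin.consEquiv (fun _ : Fin (m + 1) => LIdx)).sum_comp,
    Fintype.sum_prod_type]
  refine Finset.sum_congr rfl fun Z _ => Finset.sum_congr rfl fun ι _ => ?_
  rw [applyVec_succ]
  simp [Fin.consEquiv]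

lemma enL_deriv {φ : (Fin 4 → ℝ) → ℝ} (hφ : ContDiff ℝ (⊤ : ℕ∞) φ) (m : ℕ) {x v : Fin 4 → ℝ}
    {c : ℝ} (hc : 0 ≤ c) (hv : Ctl x v c) :
    |fderiv ℝ (enL φ m) x v| ≤ c * (99 * enL φ m x + enL φ (m + 1) x) := by
  have e : fderiv ℝ (enL φ m) x v = ∑ ι : Fin m → LIdx, fderiv ℝ (dsq (applyVec ι φ)) x v := by
    have : enL φ m = fun x => ∑ ι : Fin m → LIdx, dsq (applyVec ι φ) x := rfl
    rw [this, fderiv_fun_sum (fun ι _ => sm_diff (sm_dsq (sm_vec ι hφ)) x)]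
    simp
  rw [e, enL_succ]
  calc _ ≤ ∑ ι : Fin m → LIdx, |fderiv ℝ (dsq (applyVec ι φ)) x v| :=
        Finset.abs_sum_le_sum_abs _ _
    _ ≤ ∑ ι : Fin m → LIdx, c * (99 * dsq (applyVec ι φ) x +
          ∑ Z : LIdx, dsq (opOf Z (applyVec ι φ)) x) :=
        Finset.sum_le_sum fun ι _ => dsq_deriv (sm_vec ι hφ) hc hv
    _ = _ := by
        rw [← Finset.mul_sum, Finset.sum_add_distrib, ← Finset.mul_sum]
        rfl

lemma enB_deriv {φ : (Fin 4 → ℝ) → ℝ} (hφ : ContDiff ℝ (⊤ : ℕ∞) φ) (k : ℕ) {x v : Fin 4 → ℝ}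
    {c : ℝ} (hc : 0 ≤ c) (hv : Ctl x v c) :
    |fderiv ℝ (enB φ k) x v| ≤ 100 * c * enB φ (k + 1) x := by
  have e : fderiv ℝ (enB φ k) x v = ∑ m ∈ Finset.range (k + 1), fderiv ℝ (enL φ m) x v := by
    have : enB φ k = fun x => ∑ m ∈ Finset.range (k + 1), enL φ m x := rfl
    rw [this, fderiv_fun_sum (fun ι _ => sm_diff (sm_enL hφ _) x)]
    simp
  rw [e]
  calc _ ≤ ∑ m ∈ Finset.range (k + 1), |fderiv ℝ (enL φ m) x v| :=
        Finset.abs_sum_le_sum_abs _ _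
    _ ≤ ∑ m ∈ Finset.range (k + 1), c * (99 * enL φ m x + enL φ (m + 1) x) :=
        Finset.sum_le_sum fun m _ => enL_deriv hφ m hc hv
    _ = c * (99 * enB φ k x + ∑ m ∈ Finset.range (k + 1), enL φ (m + 1) x) := by
        rw [← Finset.mul_sum, Finset.sum_add_distrib, ← Finset.mul_sum]
        rfl
    _ ≤ c * (99 * enB φ (k + 1) x + enB φ (k + 1) x) := by
        have h1 : enB φ k x ≤ enB φ (k + 1) x := by
          rw [enB_succ]; linarith [enL_nonneg φ (k + 1) x]
        have h2 : ∑ m ∈ Finset.range (k + 1), enL φ (m + 1) x ≤ enB φ (k + 1) x := by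
          have : enB φ (k + 1) x = ∑ m ∈ Finset.range (k + 1), enL φ (m + 1) x + enL φ 0 x :=
            Finset.sum_range_succ' _ _
          rw [this]; linarith [enL_nonneg φ 0 x]
        gcongr
    _ = _ := by ring

/-- One-dimensional Sobolev inequality. -/
lemma sob1 {h h' H : ℝ → ℝ} {a L : ℝ} (hL : 0 < L) (hH : Continuous H)
    (hd : ∀ s ∈ Set.Icc a (a + L), HasDerivAt h (h' s) s)
    (hb : ∀ s ∈ Set.Icc a (a + L), |h' s| ≤ H s) :
    h a ≤ (1 / L) * (∫ s in a..(a + L), h s) + ∫ s in a..(a + L), H s := by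
  have hcont : ContinuousOn h (Set.Icc a (a + L)) := fun s hs =>
    (hd s hs).continuousAt.continuousWithinAt
  set G : ℝ → ℝ := fun s => h s + ∫ u in a..s, H u with hG
  have hGd : ∀ s ∈ Set.Icc a (a + L), HasDerivAt G (h' s + H s) s := fun s hs =>
    (hd s hs).add (intervalIntegral.integral_hasDerivAt_right (hH.intervalIntegrable _ _)
      (hH.stronglyMeasurableAtFilter _ _) hH.continuousAt)
  have hmono : MonotoneOn G (Set.Icc a (a + L)) := by
    apply monotoneOn_of_deriv_nonneg (convex_Icc _ _)
    · exact fun s hs => (hGd s hs).continuousAt.continuousWithinAt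
    · intro s hs
      exact (hGd s (interior_subset hs)).differentiableAt.differentiableWithinAt
    · intro s hs
      rw [(hGd s (interior_subset hs)).deriv]
      have := neg_le_of_abs_le (hb s (interior_subset hs))
      linarith
  have hpt : ∀ s ∈ Set.Icc a (a + L), h a ≤ h s + ∫ u in a..(a + L), H u := by
    intro s hs
    have h1 := hmono (Set.left_mem_Icc.2 (by linarith)) hs hs.1
    have h2 : ∫ u in a..s, H u ≤ ∫ u in a..(a + L), H u := by
      apply intervalIntegral.integral_mono_interval le_rfl hs.1 hs.2
      · filter_upwards [ae_restrict_mem measurableSet_Ioc] with u hu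
        exact (abs_nonneg _).trans (hb u ⟨hu.1.le, hu.2⟩)
      · exact hH.intervalIntegrable _ _
    simp [hG] at h1
    linarith
  have hint : IntervalIntegrable h volume a (a + L) :=
    ContinuousOn.intervalIntegrable_of_Icc (by linarith) hcont
  have h3 : ∫ s in a..(a + L), h a ≤ ∫ s in a..(a + L), (h s + ∫ u in a..(a + L), H u) := by
    apply intervalIntegral.integral_mono_on (by linarith) (by simp) (hint.add (by simp)) hpt
  rw [intervalIntegral.integral_add hint (by simp)] at h3
  simp at h3
  have : h a = (1 / L) * (L * h a) := by field_simp
  rw [this]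
  calc _ ≤ (1 / L) * ((∫ s in a..(a + L), h s) + L * ∫ s in a..(a + L), H s) := by gcongr
    _ = _ := by field_simp

lemma curve_bound {φ : (Fin 4 → ℝ) → ℝ} (hφ : ContDiff ℝ (⊤ : ℕ∞) φ) (k : ℕ) {a L c : ℝ}
    (hL : 0 < L) (hc : 0 ≤ c) {p p' : ℝ → (Fin 4 → ℝ)} (hpc : Continuous p)
    (hp : ∀ s ∈ Set.Icc a (a + L), HasDerivAt p (p' s) s)
    (hv : ∀ s ∈ Set.Icc a (a + L), Ctl (p s) (p' s) (c / L)) :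
    ENNReal.ofReal (enB φ k (p a)) ≤ ENNReal.ofReal ((1 + 100 * c) / L) *
      ∫⁻ s in Set.Icc a (a + L), ENNReal.ofReal (enB φ (k + 1) (p s)) := by
  have hcB : ∀ k, Continuous fun s => enB φ k (p s) := fun k => (sm_enB hφ k).continuous.comp hpc
  have h1 := sob1 (h := fun s => enB φ k (p s)) (h' := fun s => fderiv ℝ (enB φ k) (p s) (p' s))
    (H := fun s => 100 * (c / L) * enB φ (k + 1) (p s)) hL (by have := hcB (k + 1); fun_prop)
    (fun s hs => ((sm_diff (sm_enB hφ k) (p s)).hasFDerivAt.comp_hasDerivAt s (hp s hs)))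
    (fun s hs => enB_deriv hφ k (by positivity) (hv s hs))
  have h2 : ∫ s in a..(a + L), enB φ k (p s) ≤ ∫ s in a..(a + L), enB φ (k + 1) (p s) := by
    apply intervalIntegral.integral_mono_on (by linarith) ((hcB _).intervalIntegrable _ _)
      ((hcB _).intervalIntegrable _ _)
    intro s _
    rw [enB_succ]; linarith [enL_nonneg φ (k + 1) (p s)]
  have h3 : enB φ k (p a) ≤ ((1 + 100 * c) / L) * ∫ s in a..(a + L), enB φ (k + 1) (p s) := by
    rw [intervalIntegral.integral_const_mul] at h1
    calc _ ≤ _ := h1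
      _ ≤ 1 / L * (∫ s in a..(a + L), enB φ (k + 1) (p s)) +
          100 * (c / L) * ∫ s in a..(a + L), enB φ (k + 1) (p s) := by gcongr
      _ = _ := by ring
  refine (ENNReal.ofReal_le_ofReal h3).trans ?_
  rw [ENNReal.ofReal_mul (by positivity)]
  gcongr
  rw [intervalIntegral.integral_of_le (by linarith), ← integral_Icc_eq_integral_Ioc,
    ofReal_integral_eq_lintegral_ofReal]
  · exact (hcB _).integrableOn_Icc
  · exact Filter.Eventually.of_forall fun s => enB_nonneg _ _ _

/-- The space-time point with time `t` and spatial coordinates `u` (index `i`), `b`, `c`. -/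
noncomputable def PP (t : ℝ) (i : Fin 3) (u b c : ℝ) : Fin 4 → ℝ :=
  t • Pi.single 0 1 + u • Pi.single i.succ 1 + b • Pi.single (i.succAbove 0).succ 1 +
    c • Pi.single (i.succAbove 1).succ 1

lemma pt_eq (t : ℝ) (i : Fin 3) (y : EuclideanSpace ℝ (Fin 3)) :
    pt t y = PP t i (y i) (y (i.succAbove 0)) (y (i.succAbove 1)) := by
  ext j
  fin_cases i <;> fin_cases j <;> simp [pt, PP, Fin.succAbove] <;> rfl

lemma PP_zero (t : ℝ) (i : Fin 3) (u b c : ℝ) : PP t i u b c 0 = t := by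
  simp [PP]

lemma PP_sq (t : ℝ) (i : Fin 3) (u b c : ℝ) : PP t i u b c 1 ^ 2 + PP t i u b c 2 ^ 2 +
    PP t i u b c 3 ^ 2 = u ^ 2 + b ^ 2 + c ^ 2 := by
  fin_cases i <;> simp [PP, Fin.succAbove] <;> ring

lemma PP_u (t : ℝ) (i : Fin 3) (u b c : ℝ) : PP t i u b c i.succ = u := by
  fin_cases i <;> simp [PP, Fin.succAbove]

lemma PP_b (t : ℝ) (i : Fin 3) (u b c : ℝ) : PP t i u b c (i.succAbove 0).succ = b := by
  fin_cases i <;> simp [PP, Fin.succAbove]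

lemma PP_c (t : ℝ) (i : Fin 3) (u b c : ℝ) : PP t i u b c (i.succAbove 1).succ = c := by
  fin_cases i <;> simp [PP, Fin.succAbove]

lemma le_sumZ (h : (Fin 4 → ℝ) → ℝ) (x : Fin 4 → ℝ) (Z : LIdx) :
    |opOf Z h x| ≤ ∑ Z : LIdx, |opOf Z h x| :=
  Finset.single_le_sum (f := fun Z => |opOf Z h x|) (fun _ _ => abs_nonneg _) (Finset.mem_univ Z)

lemma rot_le (h : (Fin 4 → ℝ) → ℝ) (x : Fin 4 → ℝ) {a b : Fin 4} (hab : a ≠ b) :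
    |rotField a b h x| ≤ ∑ Z : LIdx, |opOf Z h x| := by
  rcases lt_or_gt_of_ne hab with hl | hl
  · exact le_sumZ h x (Sum.inr (Sum.inl ⟨(a, b), hl⟩))
  · have : rotField a b h x = - rotField b a h x := by unfold rotField; ring
    rw [this, abs_neg]
    exact le_sumZ h x (Sum.inr (Sum.inl ⟨(b, a), hl⟩))

lemma alg_bound {t ρ x y z a b c d D M : ℝ} (ht : 0 ≤ t) (hρ : 0 ≤ ρ) (hx : |x| ≤ ρ)
    (hy : |y| ≤ ρ) (hz : |z| ≤ ρ) (ha : |a| ≤ M) (hb : |b| ≤ M) (hc : |c| ≤ M) (hd : |d| ≤ M)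
    (hD : |D| ≤ M) (h : (t ^ 2 - ρ ^ 2) * D = t * a + x * b + y * c + z * d) :
    (1 + |ρ - t|) * |D| ≤ 4 * M := by
  have hM : 0 ≤ M := (abs_nonneg _).trans ha
  suffices |ρ - t| * |D| ≤ 3 * M by linarith
  rcases eq_or_lt_of_le (add_nonneg ht hρ) with h0 | h0
  · have : ρ = 0 := by linarith
    have : t = 0 := by linarith
    subst_vars; simpa using hM
  · have h1 : |(t ^ 2 - ρ ^ 2) * D| ≤ (t + ρ) * (3 * M) := by
      rw [h]
      have e1 : |t * a| ≤ t * M := by rw [abs_mul, abs_of_nonneg ht]; gcongr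
      have e2 : |x * b| ≤ ρ * M := by rw [abs_mul]; gcongr
      have e3 : |y * c| ≤ ρ * M := by rw [abs_mul]; gcongr
      have e4 : |z * d| ≤ ρ * M := by rw [abs_mul]; gcongr
      have e5 := abs_add_le (t * a + x * b + y * c) (z * d)
      have e6 := abs_add_le (t * a + x * b) (y * c)
      have e7 := abs_add_le (t * a) (x * b)
      have : 0 ≤ t * M := by positivity
      linarith
    have h2 : |(t ^ 2 - ρ ^ 2) * D| = (t + ρ) * (|ρ - t| * |D|) := by
      have : (t ^ 2 - ρ ^ 2) * D = -((t + ρ) * ((ρ - t) * D)) := by ring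
      rw [this, abs_neg, abs_mul, abs_mul, abs_of_pos h0]
    rw [h2] at h1
    exact le_of_mul_le_mul_left h1 h0

lemma pd_bound (h : (Fin 4 → ℝ) → ℝ) {x : Fin 4 → ℝ} {ρ : ℝ} (hx : 0 ≤ x 0) (hρ : 0 ≤ ρ)
    (hρ2 : ρ ^ 2 = x 1 ^ 2 + x 2 ^ 2 + x 3 ^ 2) (α : Fin 4) :
    (1 + |ρ - x 0|) * |pd α h x| ≤ 4 * ∑ Z : LIdx, |opOf Z h x| := by
  have b1 : |x 1| ≤ ρ := abs_le_of_sq_le_sq (by nlinarith [sq_nonneg (x 2), sq_nonneg (x 3)]) hρ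
  have b2 : |x 2| ≤ ρ := abs_le_of_sq_le_sq (by nlinarith [sq_nonneg (x 1), sq_nonneg (x 3)]) hρ
  have b3 : |x 3| ≤ ρ := abs_le_of_sq_le_sq (by nlinarith [sq_nonneg (x 2), sq_nonneg (x 1)]) hρ
  have n1 : |-x 1| ≤ ρ := by rwa [abs_neg]
  have n2 : |-x 2| ≤ ρ := by rwa [abs_neg]
  have n3 : |-x 3| ≤ ρ := by rwa [abs_neg]
  have hS : |scalingField h x| ≤ ∑ Z : LIdx, |opOf Z h x| := le_sumZ h x (Sum.inr (Sum.inr ()))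
  have hD : |pd α h x| ≤ ∑ Z : LIdx, |opOf Z h x| := le_sumZ h x (Sum.inl α)
  have rr := fun a b (hab : a ≠ b) => rot_le h x (a := a) (b := b) hab
  have eS : scalingField h x = x 0 * pd 0 h x + x 1 * pd 1 h x + x 2 * pd 2 h x + x 3 * pd 3 h x := by
    simp [scalingField, Fin.sum_univ_four]
  fin_cases α
  · refine alg_bound hx hρ n1 n2 n3 hS (rr 0 1 (by decide)) (rr 0 2 (by decide))
      (rr 0 3 (by decide)) hD ?_
    simp [eS, hρ2, rotField, lowerCoord]; ring
  · refine alg_bound hx hρ n1 n2 n3 (rr 0 1 (by decide)) hS (rr 1 2 (by decide))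
      (rr 1 3 (by decide)) hD ?_
    simp [eS, hρ2, rotField, lowerCoord]; ring
  · refine alg_bound hx hρ n2 n1 n3 (rr 0 2 (by decide)) hS (rr 2 1 (by decide))
      (rr 2 3 (by decide)) hD ?_
    simp [eS, hρ2, rotField, lowerCoord]; ring
  · refine alg_bound hx hρ n3 n1 n2 (rr 0 3 (by decide)) hS (rr 3 1 (by decide))
      (rr 3 2 (by decide)) hD ?_
    simp [eS, hρ2, rotField, lowerCoord]; ring

/-- Spatial radius. -/
noncomputable def rad (u b c : ℝ) : ℝ := Real.sqrt (u ^ 2 + b ^ 2 + c ^ 2)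

lemma rad_nonneg (u b c : ℝ) : 0 ≤ rad u b c := Real.sqrt_nonneg _

lemma rad_sq (u b c : ℝ) : rad u b c ^ 2 = u ^ 2 + b ^ 2 + c ^ 2 := Real.sq_sqrt (by positivity)

lemma norm_eq_rad (i : Fin 3) (y : EuclideanSpace ℝ (Fin 3)) :
    ‖y‖ = rad (y i) (y (i.succAbove 0)) (y (i.succAbove 1)) := by
  rw [EuclideanSpace.norm_eq, rad]
  congr 1
  rw [Fin.sum_univ_succAbove _ i]
  simp [Fin.sum_univ_two, add_assoc]

lemma rad_lip (u b c u' b' c' : ℝ) :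
    |rad u' b' c' - rad u b c| ≤ |u' - u| + |b' - b| + |c' - c| := by
  have e : ∀ u b c : ℝ, rad u b c = ‖(!₂[u, b, c] : EuclideanSpace ℝ (Fin 3))‖ := by
    intro u b c
    rw [norm_eq_rad 0]
    rfl
  rw [e, e]
  refine (abs_norm_sub_norm_le _ _).trans ?_
  rw [norm_eq_rad 0, rad]
  refine Real.sqrt_le_iff.2 ⟨by positivity, ?_⟩
  show (u' - u) ^ 2 + (b' - b) ^ 2 + (c' - c) ^ 2 ≤ _
  rw [← sq_abs (u' - u), ← sq_abs (b' - b), ← sq_abs (c' - c)]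
  have := abs_nonneg (u' - u)
  have := abs_nonneg (b' - b)
  have := abs_nonneg (c' - c)
  nlinarith [mul_nonneg (abs_nonneg (u' - u)) (abs_nonneg (b' - b)),
    mul_nonneg (abs_nonneg (u' - u)) (abs_nonneg (c' - c)),
    mul_nonneg (abs_nonneg (b' - b)) (abs_nonneg (c' - c))]

lemma ctl_straight {t Q : ℝ} (ht : 0 ≤ t) (i : Fin 3) {u b c : ℝ} (hQ : 0 < Q)
    (hq : Q / 2 ≤ 1 + |rad u b c - t|) (α : Fin 4) :
    Ctl (PP t i u b c) (Pi.single α 1) (2 / (Q / 6)) := by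
  intro h _
  have h1 := pd_bound h (x := PP t i u b c) (ρ := rad u b c) (by rw [PP_zero]; exact ht)
    (rad_nonneg _ _ _) (by rw [PP_sq, rad_sq]) α
  rw [PP_zero] at h1
  set M := ∑ Z : LIdx, |opOf Z h (PP t i u b c)|
  have hM : 0 ≤ M := Finset.sum_nonneg fun _ _ => abs_nonneg _
  change |pd α h (PP t i u b c)| ≤ _
  have h2 : Q / 2 * |pd α h (PP t i u b c)| ≤ 4 * M := le_trans (by gcongr) h1
  have : 2 / (Q / 6) * M = (12 * M) / Q := by field_simp; ring
  rw [this, le_div_iff₀ hQ]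
  linarith

lemma ctl_rot {L : ℝ} {x : Fin 4 → ℝ} (i j : Fin 3) (hij : i ≠ j) (hL : 0 < L)
    (hu : L ≤ |x i.succ|) :
    Ctl x (Pi.single j.succ 1 + (-(x j.succ / x i.succ)) • Pi.single i.succ 1) (2 / L) := by
  intro h _
  have hu0 : 0 < |x i.succ| := hL.trans_le hu
  have hne : x i.succ ≠ 0 := abs_pos.1 hu0
  have h1 := rot_le h x (a := i.succ) (b := j.succ) (by simpa using hij)
  set M := ∑ Z : LIdx, |opOf Z h x|
  have hM : 0 ≤ M := Finset.sum_nonneg fun _ _ => abs_nonneg _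
  have e : fderiv ℝ h x (Pi.single j.succ 1 + (-(x j.succ / x i.succ)) • Pi.single i.succ 1) =
      - (rotField i.succ j.succ h x) / x i.succ := by
    rw [map_add, map_smul]
    simp [rotField, lowerCoord, pd]
    field_simp
    ring
  rw [e, abs_div, abs_neg, div_le_iff₀ hu0]
  have : M ≤ 2 / L * M * L := by field_simp; linarith
  have h3 : 2 / L * M * L ≤ 2 / L * M * |x i.succ| := by gcongr
  linarith

/-- Coordinates `E³ → ℝ × ℝ × ℝ`. -/
lemma lint_coords (i : Fin 3) {F : EuclideanSpace ℝ (Fin 3) → ENNReal} (hF : Measurable F) :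
    ∫⁻ y, F y = ∫⁻ b : ℝ, ∫⁻ c : ℝ, ∫⁻ u : ℝ,
      F (WithLp.toLp 2 (i.insertNth (α := fun _ => ℝ) u ![b, c])) := by
  have hF2 : Measurable fun y : Fin 3 → ℝ => F (WithLp.toLp 2 y) :=
    hF.comp (PiLp.volume_preserving_toLp (Fin 3)).measurable
  have h1 := (PiLp.volume_preserving_toLp (Fin 3)).lintegral_comp hF
  rw [← h1]
  have m2 := (volume_preserving_piFinSuccAbove (fun _ : Fin 3 => ℝ) i).symm
  rw [← m2.lintegral_comp hF2]
  have hm2 : Measurable fun p : ℝ × (Fin 2 → ℝ) =>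
      F (WithLp.toLp 2 ((MeasurableEquiv.piFinSuccAbove (fun _ : Fin 3 => ℝ) i).symm p)) :=
    hF2.comp m2.measurable
  rw [Measure.volume_eq_prod, lintegral_prod_symm _ hm2.aemeasurable]
  have m3 := (volume_preserving_finTwoArrow ℝ).symm
  have hm3 : Measurable fun z : Fin 2 → ℝ => ∫⁻ u : ℝ,
      F (WithLp.toLp 2 ((MeasurableEquiv.piFinSuccAbove (fun _ : Fin 3 => ℝ) i).symm (u, z))) :=
    hm2.lintegral_prod_left'
  rw [← m3.lintegral_comp hm3, Measure.volume_eq_prod]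
  exact lintegral_prod _ (hm3.comp m3.measurable).aemeasurable

lemma PP_toLp (t : ℝ) (i : Fin 3) (u b c : ℝ) :
    pt t (WithLp.toLp 2 (i.insertNth (α := fun _ => ℝ) u ![b, c])) = PP t i u b c := by
  rw [pt_eq t i]; simp

lemma norm_toLp (i : Fin 3) (u b c : ℝ) :
    ‖(WithLp.toLp 2 (i.insertNth (α := fun _ => ℝ) u ![b, c]) : EuclideanSpace ℝ (Fin 3))‖ =
      rad u b c := by
  rw [norm_eq_rad i]; simp

lemma wgt_ge_one (γ μ q : ℝ) : 1 ≤ wgt γ μ q := by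
  unfold wgt
  split_ifs
  · have : 0 ≤ (1 + |q|) ^ (1 + 2 * γ) := by positivity
    linarith
  · have : 0 ≤ (1 + |q|) ^ (-(2 * μ)) := by positivity
    linarith

lemma wgt_ge {γ μ q q' : ℝ} (hγ : γ ∈ Set.Ioo (0 : ℝ) (1 / 2)) (hq : 0 < q)
    (hd : |q' - q| ≤ (1 + |q|) / 2) : (1 + |q|) ^ (1 + 2 * γ) / 4 ≤ wgt γ μ q' := by
  rw [abs_of_pos hq] at *
  have h2 := hγ.1
  have h3 := hγ.2
  have hd' := abs_le.1 hd
  have h22 : (2 : ℝ) ^ (1 + 2 * γ) ≤ 4 := by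
    calc (2 : ℝ) ^ (1 + 2 * γ) ≤ 2 ^ (2 : ℝ) :=
          Real.rpow_le_rpow_of_exponent_le (by norm_num) (by linarith)
      _ = 4 := by norm_num
  rcases le_or_gt 0 q' with h | h
  · unfold wgt
    rw [if_pos h, abs_of_nonneg h]
    have h4 : (1 + q) ^ (1 + 2 * γ) ≤ (2 * (1 + q')) ^ (1 + 2 * γ) :=
      Real.rpow_le_rpow (by linarith) (by linarith) (by linarith)
    rw [Real.mul_rpow (by norm_num) (by linarith)] at h4
    have h5 : 0 ≤ (1 + q') ^ (1 + 2 * γ) := by positivity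
    have : (2 : ℝ) ^ (1 + 2 * γ) * (1 + q') ^ (1 + 2 * γ) ≤ 4 * (1 + q') ^ (1 + 2 * γ) := by gcongr
    linarith
  · have h4 : (1 + q) ^ (1 + 2 * γ) ≤ 2 ^ (1 + 2 * γ) :=
      Real.rpow_le_rpow (by linarith) (by linarith) (by linarith)
    linarith [wgt_ge_one γ μ q']

lemma meas_wgt (γ μ : ℝ) : Measurable (wgt γ μ) := by
  unfold wgt
  refine Measurable.ite measurableSet_Ici ?_ ?_ <;> fun_prop

lemma cont_pt (t : ℝ) : Continuous (pt t) := by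
  unfold pt
  refine continuous_pi fun j => ?_
  refine Fin.cases ?_ (fun i => ?_) j
  · simpa using continuous_const
  · simp only [Fin.cons_succ]; fun_prop

lemma cont_grad {g : (Fin 4 → ℝ) → ℝ} (hg : ContDiff ℝ (⊤ : ℕ∞) g) : Continuous (gradNorm g) := by
  unfold gradNorm
  exact Continuous.finset_sup'_apply _ fun α _ => (sm_pd hg α).continuous.abs

lemma dsq_le (g : (Fin 4 → ℝ) → ℝ) (x : Fin 4 → ℝ) : dsq g x ≤ 4 * gradNorm g x ^ 2 := by
  unfold dsq
  have : ∀ α, (pd α g x) ^ 2 ≤ gradNorm g x ^ 2 := by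
    intro α
    rw [← sq_abs (pd α g x)]
    have : |pd α g x| ≤ gradNorm g x :=
      Finset.le_sup' (fun α : Fin 4 => |pd α g x|) (Finset.mem_univ α)
    gcongr
  calc _ ≤ ∑ α : Fin 4, gradNorm g x ^ 2 := Finset.sum_le_sum fun α _ => this α
    _ = _ := by simp

lemma grad_sq_le (g : (Fin 4 → ℝ) → ℝ) (x : Fin 4 → ℝ) : gradNorm g x ^ 2 ≤ dsq g x := by
  obtain ⟨α, _, h⟩ := Finset.exists_mem_eq_sup' (Finset.univ_nonempty (α := Fin 4))
    (fun α : Fin 4 => |pd α g x|)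
  unfold gradNorm
  rw [h, sq_abs]
  exact Finset.single_le_sum (f := fun α => (pd α g x) ^ 2) (fun _ _ => sq_nonneg _)
    (Finset.mem_univ α)

lemma energy_bound {N : ℕ} {γ μ : ℝ} {φ : (Fin 4 → ℝ) → ℝ} (hφ : ContDiff ℝ (⊤ : ℕ∞) φ)
    {t ε : ℝ} (hε : 0 < ε)
    (hyp : ∑ k : Fin (N + 1), ∑ ι : Fin (k : ℕ) → LIdx,
          eLpNorm (fun y : EuclideanSpace ℝ (Fin 3) =>
            Real.sqrt (wgt γ μ (‖y‖ - t)) * gradNorm (applyVec ι φ) (pt t y)) 2 volume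
          ≤ ENNReal.ofReal ε) :
    ∫⁻ y : EuclideanSpace ℝ (Fin 3), ENNReal.ofReal (wgt γ μ (‖y‖ - t)) *
      ENNReal.ofReal (enB φ N (pt t y)) ≤
      ENNReal.ofReal ((∑ m ∈ Finset.range (N + 1), ∑ _ι : Fin m → LIdx, (4 : ℝ)) * ε ^ 2) := by
  have hmw : Measurable fun y : EuclideanSpace ℝ (Fin 3) => ENNReal.ofReal (wgt γ μ (‖y‖ - t)) :=
    ENNReal.measurable_ofReal.comp ((meas_wgt γ μ).comp (by fun_prop))
  have hmd : ∀ (m : ℕ) (ι : Fin m → LIdx), Measurable fun y : EuclideanSpace ℝ (Fin 3) =>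
      ENNReal.ofReal (wgt γ μ (‖y‖ - t)) * ENNReal.ofReal (dsq (applyVec ι φ) (pt t y)) := by
    intro m ι
    refine hmw.mul (ENNReal.measurable_ofReal.comp ?_)
    exact ((sm_dsq (sm_vec ι hφ)).continuous.comp (cont_pt t)).measurable
  have e1 : ∀ y : EuclideanSpace ℝ (Fin 3), ENNReal.ofReal (wgt γ μ (‖y‖ - t)) *
      ENNReal.ofReal (enB φ N (pt t y)) = ∑ m ∈ Finset.range (N + 1), ∑ ι : Fin m → LIdx,
      ENNReal.ofReal (wgt γ μ (‖y‖ - t)) * ENNReal.ofReal (dsq (applyVec ι φ) (pt t y)) := by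
    intro y
    unfold enB enL
    rw [ENNReal.ofReal_sum_of_nonneg
      (fun m _ => Finset.sum_nonneg fun ι _ => dsq_nonneg _ _), Finset.mul_sum]
    refine Finset.sum_congr rfl fun m _ => ?_
    rw [ENNReal.ofReal_sum_of_nonneg (fun ι _ => dsq_nonneg _ _), Finset.mul_sum]
  simp_rw [e1]
  rw [lintegral_finsetSum _ (fun m _ => Finset.measurable_fun_sum _ fun ι _ => hmd m ι)]
  rw [Finset.sum_mul, ENNReal.ofReal_sum_of_nonneg (fun m _ => by positivity)]
  refine Finset.sum_le_sum fun m hm => ?_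
  rw [lintegral_finsetSum _ (fun ι _ => hmd m ι), Finset.sum_mul,
    ENNReal.ofReal_sum_of_nonneg (fun ι _ => by positivity)]
  refine Finset.sum_le_sum fun ι _ => ?_
  set f : EuclideanSpace ℝ (Fin 3) → ℝ := fun y =>
    Real.sqrt (wgt γ μ (‖y‖ - t)) * gradNorm (applyVec ι φ) (pt t y) with hf
  have h1 : eLpNorm f 2 volume ≤ ENNReal.ofReal ε := by
    refine le_trans ?_ hyp
    have a1 := Finset.single_le_sum (f := fun k : Fin (N + 1) => ∑ ι : Fin (k : ℕ) → LIdx,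
          eLpNorm (fun y : EuclideanSpace ℝ (Fin 3) =>
            Real.sqrt (wgt γ μ (‖y‖ - t)) * gradNorm (applyVec ι φ) (pt t y)) 2 volume)
      (fun _ _ => zero_le) (Finset.mem_univ (⟨m, Finset.mem_range.1 hm⟩ : Fin (N + 1)))
    refine le_trans ?_ a1
    exact Finset.single_le_sum (f := fun ι : Fin m → LIdx =>
          eLpNorm (fun y : EuclideanSpace ℝ (Fin 3) =>
            Real.sqrt (wgt γ μ (‖y‖ - t)) * gradNorm (applyVec ι φ) (pt t y)) 2 volume)
      (fun _ _ => zero_le) (Finset.mem_univ ι)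
  have h2 : eLpNorm f 2 volume ^ (2 : ℝ) = ∫⁻ y, ‖f y‖ₑ ^ (2 : ℝ) := by
    have := eLpNorm_nnreal_pow_eq_lintegral (f := f) (μ := volume) (p := 2) (by norm_num)
    simpa using this
  have h3 : ∀ y, ENNReal.ofReal (wgt γ μ (‖y‖ - t)) *
      ENNReal.ofReal (dsq (applyVec ι φ) (pt t y)) ≤ 4 * ‖f y‖ₑ ^ (2 : ℝ) := by
    intro y
    have hw := wgt_ge_one γ μ (‖y‖ - t)
    have : ‖f y‖ₑ ^ (2 : ℝ) = ENNReal.ofReal (f y ^ 2) := by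
      rw [← ofReal_norm, ENNReal.ofReal_rpow_of_nonneg (norm_nonneg _) (by norm_num)]
      congr 1
      rw [Real.rpow_two, Real.norm_eq_abs, sq_abs]
    have h4 : (4 : ENNReal) = ENNReal.ofReal 4 := by norm_num
    rw [this, h4, ← ENNReal.ofReal_mul (by linarith), ← ENNReal.ofReal_mul (by norm_num)]
    apply ENNReal.ofReal_le_ofReal
    have : f y ^ 2 = wgt γ μ (‖y‖ - t) * gradNorm (applyVec ι φ) (pt t y) ^ 2 := by
      simp only [hf]; rw [mul_pow, Real.sq_sqrt (by linarith)]
    rw [this]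
    have := dsq_le (applyVec ι φ) (pt t y)
    nlinarith
  calc _ ≤ ∫⁻ y, 4 * ‖f y‖ₑ ^ (2 : ℝ) := lintegral_mono h3
    _ = 4 * eLpNorm f 2 volume ^ (2 : ℝ) := by
        rw [lintegral_const_mul' _ _ (by norm_num), h2]
    _ ≤ 4 * ENNReal.ofReal ε ^ (2 : ℝ) := by gcongr
    _ = _ := by
        rw [ENNReal.ofReal_rpow_of_nonneg hε.le (by norm_num), ENNReal.ofReal_mul (by norm_num)]
        simp

lemma chain {φ : (Fin 4 → ℝ) → ℝ} (hφ : ContDiff ℝ (⊤ : ℕ∞) φ) (k : ℕ) (γ μ t : ℝ) (i : Fin 3)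
    {u0 b0 c0 L l K V : ℝ} (hL : 0 < L) (hl : 0 < l) (hK : 0 ≤ K) (hV : 0 ≤ V) (ψ : ℝ → ℝ → ℝ)
    (H1 : ENNReal.ofReal (enB φ k (PP t i u0 b0 c0)) ≤ ENNReal.ofReal (K / L) *
      ∫⁻ b in Set.Icc b0 (b0 + L), ENNReal.ofReal (enB φ (k + 1) (PP t i (ψ b c0) b c0)))
    (H2 : ∀ b ∈ Set.Icc b0 (b0 + L), ENNReal.ofReal (enB φ (k + 1) (PP t i (ψ b c0) b c0)) ≤
      ENNReal.ofReal (K / L) *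
      ∫⁻ c in Set.Icc c0 (c0 + L), ENNReal.ofReal (enB φ (k + 2) (PP t i (ψ b c) b c)))
    (H3 : ∀ b ∈ Set.Icc b0 (b0 + L), ∀ c ∈ Set.Icc c0 (c0 + L),
      ENNReal.ofReal (enB φ (k + 2) (PP t i (ψ b c) b c)) ≤ ENNReal.ofReal (K / l) *
      ∫⁻ u in Set.Icc (ψ b c) (ψ b c + l), ENNReal.ofReal (enB φ (k + 3) (PP t i u b c)))
    (Hw : ∀ b ∈ Set.Icc b0 (b0 + L), ∀ c ∈ Set.Icc c0 (c0 + L),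
      ∀ u ∈ Set.Icc (ψ b c) (ψ b c + l), V ≤ wgt γ μ (rad u b c - t)) :
    ENNReal.ofReal (V * enB φ k (PP t i u0 b0 c0)) ≤ ENNReal.ofReal (K ^ 3 / (L ^ 2 * l)) *
      ∫⁻ y : EuclideanSpace ℝ (Fin 3), ENNReal.ofReal (wgt γ μ (‖y‖ - t)) *
        ENNReal.ofReal (enB φ (k + 3) (pt t y)) := by
  have hmw : Measurable fun y : EuclideanSpace ℝ (Fin 3) => ENNReal.ofReal (wgt γ μ (‖y‖ - t)) *
      ENNReal.ofReal (enB φ (k + 3) (pt t y)) := by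
    refine (ENNReal.measurable_ofReal.comp ((meas_wgt γ μ).comp (by fun_prop))).mul
      (ENNReal.measurable_ofReal.comp ?_)
    exact ((sm_enB hφ _).continuous.comp (cont_pt t)).measurable
  rw [lint_coords i hmw]
  simp only [PP_toLp, norm_toLp]
  have s3 : ∀ b ∈ Set.Icc b0 (b0 + L), ∀ c ∈ Set.Icc c0 (c0 + L),
      ENNReal.ofReal V * ENNReal.ofReal (enB φ (k + 2) (PP t i (ψ b c) b c)) ≤
      ENNReal.ofReal (K / l) * ∫⁻ u : ℝ, ENNReal.ofReal (wgt γ μ (rad u b c - t)) *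
        ENNReal.ofReal (enB φ (k + 3) (PP t i u b c)) := by
    intro b hb c hc
    calc _ ≤ ENNReal.ofReal V * (ENNReal.ofReal (K / l) *
          ∫⁻ u in Set.Icc (ψ b c) (ψ b c + l), ENNReal.ofReal (enB φ (k + 3) (PP t i u b c))) := by
          gcongr; exact H3 b hb c hc
      _ = ENNReal.ofReal (K / l) * ∫⁻ u in Set.Icc (ψ b c) (ψ b c + l),
          ENNReal.ofReal V * ENNReal.ofReal (enB φ (k + 3) (PP t i u b c)) := by
          rw [lintegral_const_mul' _ _ ENNReal.ofReal_ne_top]; ring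
      _ ≤ ENNReal.ofReal (K / l) * ∫⁻ u in Set.Icc (ψ b c) (ψ b c + l),
          ENNReal.ofReal (wgt γ μ (rad u b c - t)) *
            ENNReal.ofReal (enB φ (k + 3) (PP t i u b c)) := by
          gcongr ENNReal.ofReal (K / l) * ?_
          refine setLIntegral_mono' measurableSet_Icc fun u hu => ?_
          gcongr
          exact Hw b hb c hc u hu
      _ ≤ _ := by
          gcongr
          exact Measure.restrict_le_self
  have s2 : ∀ b ∈ Set.Icc b0 (b0 + L),
      ENNReal.ofReal V * ENNReal.ofReal (enB φ (k + 1) (PP t i (ψ b c0) b c0)) ≤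
      ENNReal.ofReal (K / L) * ENNReal.ofReal (K / l) * ∫⁻ c : ℝ, ∫⁻ u : ℝ,
        ENNReal.ofReal (wgt γ μ (rad u b c - t)) *
        ENNReal.ofReal (enB φ (k + 3) (PP t i u b c)) := by
    intro b hb
    calc _ ≤ ENNReal.ofReal V * (ENNReal.ofReal (K / L) *
          ∫⁻ c in Set.Icc c0 (c0 + L), ENNReal.ofReal (enB φ (k + 2) (PP t i (ψ b c) b c))) := by
          gcongr; exact H2 b hb
      _ = ENNReal.ofReal (K / L) * ∫⁻ c in Set.Icc c0 (c0 + L),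
          ENNReal.ofReal V * ENNReal.ofReal (enB φ (k + 2) (PP t i (ψ b c) b c)) := by
          rw [lintegral_const_mul' _ _ ENNReal.ofReal_ne_top]; ring
      _ ≤ ENNReal.ofReal (K / L) * ∫⁻ c in Set.Icc c0 (c0 + L), ENNReal.ofReal (K / l) *
          ∫⁻ u : ℝ, ENNReal.ofReal (wgt γ μ (rad u b c - t)) *
            ENNReal.ofReal (enB φ (k + 3) (PP t i u b c)) := by
          gcongr ENNReal.ofReal (K / L) * ?_
          exact setLIntegral_mono' measurableSet_Icc fun c hc => s3 b hb c hc
      _ ≤ ENNReal.ofReal (K / L) * ∫⁻ c : ℝ, ENNReal.ofReal (K / l) *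
          ∫⁻ u : ℝ, ENNReal.ofReal (wgt γ μ (rad u b c - t)) *
            ENNReal.ofReal (enB φ (k + 3) (PP t i u b c)) := by
          gcongr
          exact Measure.restrict_le_self
      _ = _ := by
          rw [lintegral_const_mul' _ _ ENNReal.ofReal_ne_top]; ring
  rw [ENNReal.ofReal_mul hV]
  calc _ ≤ ENNReal.ofReal V * (ENNReal.ofReal (K / L) *
          ∫⁻ b in Set.Icc b0 (b0 + L), ENNReal.ofReal (enB φ (k + 1) (PP t i (ψ b c0) b c0))) := by
          gcongr
    _ = ENNReal.ofReal (K / L) * ∫⁻ b in Set.Icc b0 (b0 + L),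
          ENNReal.ofReal V * ENNReal.ofReal (enB φ (k + 1) (PP t i (ψ b c0) b c0)) := by
          rw [lintegral_const_mul' _ _ ENNReal.ofReal_ne_top]; ring
    _ ≤ ENNReal.ofReal (K / L) * ∫⁻ b in Set.Icc b0 (b0 + L),
          ENNReal.ofReal (K / L) * ENNReal.ofReal (K / l) * ∫⁻ c : ℝ, ∫⁻ u : ℝ,
            ENNReal.ofReal (wgt γ μ (rad u b c - t)) *
            ENNReal.ofReal (enB φ (k + 3) (PP t i u b c)) := by
          gcongr ENNReal.ofReal (K / L) * ?_
          exact setLIntegral_mono' measurableSet_Icc fun b hb => s2 b hb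
    _ ≤ ENNReal.ofReal (K / L) * ∫⁻ b : ℝ,
          ENNReal.ofReal (K / L) * ENNReal.ofReal (K / l) * ∫⁻ c : ℝ, ∫⁻ u : ℝ,
            ENNReal.ofReal (wgt γ μ (rad u b c - t)) *
            ENNReal.ofReal (enB φ (k + 3) (PP t i u b c)) := by
          gcongr
          exact Measure.restrict_le_self
    _ = _ := by
          rw [lintegral_const_mul' _ _ (by finiteness), ← mul_assoc, ← mul_assoc,
            ← ENNReal.ofReal_mul (by positivity), ← ENNReal.ofReal_mul (by positivity)]
          congr 2
          field_simp

lemma cont_PP {X : Type*} [TopologicalSpace X] (t : ℝ) (i : Fin 3) {u b c : X → ℝ}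
    (hu : Continuous u) (hb : Continuous b) (hc : Continuous c) :
    Continuous fun x => PP t i (u x) (b x) (c x) := by
  unfold PP
  fun_prop

lemma deriv_PP (t : ℝ) (i : Fin 3) {u b c : ℝ → ℝ} {u' b' c' s : ℝ}
    (hu : HasDerivAt u u' s) (hb : HasDerivAt b b' s) (hc : HasDerivAt c c' s) :
    HasDerivAt (fun x => PP t i (u x) (b x) (c x))
      (u' • Pi.single i.succ 1 + b' • Pi.single (i.succAbove 0).succ 1 +
        c' • Pi.single (i.succAbove 1).succ 1) s := by
  unfold PP
  have h := ((((hasDerivAt_const s (t • Pi.single (M := fun _ : Fin 4 => ℝ) 0 1)).add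
    (hu.smul_const (Pi.single (M := fun _ : Fin 4 => ℝ) i.succ 1))).add
    (hb.smul_const (Pi.single (M := fun _ : Fin 4 => ℝ) (i.succAbove 0).succ 1))).add
    (hc.smul_const (Pi.single (M := fun _ : Fin 4 => ℝ) (i.succAbove 1).succ 1)))
  rw [zero_add] at h
  exact h

lemma step_u {φ : (Fin 4 → ℝ) → ℝ} (hφ : ContDiff ℝ (⊤ : ℕ∞) φ) (k : ℕ)
    {t Q : ℝ} (ht : 0 ≤ t) (hQ : 0 < Q) (i : Fin 3) (u1 b c : ℝ)
    (hq : ∀ u ∈ Set.Icc u1 (u1 + Q / 6), Q / 2 ≤ 1 + |rad u b c - t|) :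
    ENNReal.ofReal (enB φ k (PP t i u1 b c)) ≤ ENNReal.ofReal (201 / (Q / 6)) *
      ∫⁻ u in Set.Icc u1 (u1 + Q / 6), ENNReal.ofReal (enB φ (k + 1) (PP t i u b c)) := by
  have := curve_bound hφ k (a := u1) (L := Q / 6) (c := 2) (by positivity) (by norm_num)
    (p := fun u => PP t i u b c) (p' := fun _ => Pi.single i.succ 1)
    (cont_PP t i continuous_id continuous_const continuous_const)
    (fun s _ => by
      simpa using deriv_PP t i (hasDerivAt_id s) (hasDerivAt_const s b) (hasDerivAt_const s c))
    (fun s hs => ctl_straight ht i hQ (hq s hs) _)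
  norm_num at this ⊢
  exact this

lemma step_b {φ : (Fin 4 → ℝ) → ℝ} (hφ : ContDiff ℝ (⊤ : ℕ∞) φ) (k : ℕ)
    {t Q : ℝ} (ht : 0 ≤ t) (hQ : 0 < Q) (i : Fin 3) (u b1 c : ℝ)
    (hq : ∀ b ∈ Set.Icc b1 (b1 + Q / 6), Q / 2 ≤ 1 + |rad u b c - t|) :
    ENNReal.ofReal (enB φ k (PP t i u b1 c)) ≤ ENNReal.ofReal (201 / (Q / 6)) *
      ∫⁻ b in Set.Icc b1 (b1 + Q / 6), ENNReal.ofReal (enB φ (k + 1) (PP t i u b c)) := by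
  have := curve_bound hφ k (a := b1) (L := Q / 6) (c := 2) (by positivity) (by norm_num)
    (p := fun b => PP t i u b c) (p' := fun _ => Pi.single (i.succAbove 0).succ 1)
    (cont_PP t i continuous_const continuous_id continuous_const)
    (fun s _ => by
      simpa using deriv_PP t i (hasDerivAt_const s u) (hasDerivAt_id s) (hasDerivAt_const s c))
    (fun s hs => ctl_straight ht i hQ (hq s hs) _)
  norm_num at this ⊢
  exact this

lemma step_c {φ : (Fin 4 → ℝ) → ℝ} (hφ : ContDiff ℝ (⊤ : ℕ∞) φ) (k : ℕ)
    {t Q : ℝ} (ht : 0 ≤ t) (hQ : 0 < Q) (i : Fin 3) (u b c1 : ℝ)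
    (hq : ∀ c ∈ Set.Icc c1 (c1 + Q / 6), Q / 2 ≤ 1 + |rad u b c - t|) :
    ENNReal.ofReal (enB φ k (PP t i u b c1)) ≤ ENNReal.ofReal (201 / (Q / 6)) *
      ∫⁻ c in Set.Icc c1 (c1 + Q / 6), ENNReal.ofReal (enB φ (k + 1) (PP t i u b c)) := by
  have := curve_bound hφ k (a := c1) (L := Q / 6) (c := 2) (by positivity) (by norm_num)
    (p := fun c => PP t i u b c) (p' := fun _ => Pi.single (i.succAbove 1).succ 1)
    (cont_PP t i continuous_const continuous_const continuous_id)
    (fun s _ => by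
      simpa using deriv_PP t i (hasDerivAt_const s u) (hasDerivAt_const s b) (hasDerivAt_id s))
    (fun s hs => ctl_straight ht i hQ (hq s hs) _)
  norm_num at this ⊢
  exact this

/-- Interior / bounded region: straight box. -/
lemma straight_case {φ : (Fin 4 → ℝ) → ℝ} (hφ : ContDiff ℝ (⊤ : ℕ∞) φ) (k : ℕ)
    {γ μ t : ℝ} (ht : 0 ≤ t) (i : Fin 3) {u0 b0 c0 Q V : ℝ}
    (hQ : Q = 1 + |rad u0 b0 c0 - t|) (hV : 0 ≤ V)
    (hw : ∀ q', |q' - (rad u0 b0 c0 - t)| ≤ Q / 2 → V ≤ wgt γ μ q') :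
    ENNReal.ofReal (V * enB φ k (PP t i u0 b0 c0)) ≤
      ENNReal.ofReal (201 ^ 3 / ((Q / 6) ^ 2 * (Q / 6))) *
      ∫⁻ y : EuclideanSpace ℝ (Fin 3), ENNReal.ofReal (wgt γ μ (‖y‖ - t)) *
        ENNReal.ofReal (enB φ (k + 3) (pt t y)) := by
  have hQ0 : 0 < Q := by rw [hQ]; positivity
  have near : ∀ u ∈ Set.Icc u0 (u0 + Q / 6), ∀ b ∈ Set.Icc b0 (b0 + Q / 6),
      ∀ c ∈ Set.Icc c0 (c0 + Q / 6), |rad u b c - rad u0 b0 c0| ≤ Q / 2 := by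
    intro u hu b hb c hc
    refine (rad_lip u0 b0 c0 u b c).trans ?_
    rw [abs_of_nonneg (by linarith [hu.1]), abs_of_nonneg (by linarith [hb.1]),
      abs_of_nonneg (by linarith [hc.1])]
    linarith [hu.2, hb.2, hc.2]
  have nq : ∀ u ∈ Set.Icc u0 (u0 + Q / 6), ∀ b ∈ Set.Icc b0 (b0 + Q / 6),
      ∀ c ∈ Set.Icc c0 (c0 + Q / 6), Q / 2 ≤ 1 + |rad u b c - t| := by
    intro u hu b hb c hc
    have h1 := near u hu b hb c hc
    have h2 := abs_sub_abs_le_abs_sub (rad u0 b0 c0 - t) (rad u b c - t)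
    rw [show rad u0 b0 c0 - t - (rad u b c - t) = -(rad u b c - rad u0 b0 c0) by ring,
      abs_neg] at h2
    linarith
  have lu : u0 ∈ Set.Icc u0 (u0 + Q / 6) := ⟨le_rfl, by linarith⟩
  have lc : c0 ∈ Set.Icc c0 (c0 + Q / 6) := ⟨le_rfl, by linarith⟩
  refine chain hφ k γ μ t i (by positivity) (by positivity) (by norm_num) hV (fun _ _ => u0)
    ?_ ?_ ?_ ?_
  · exact step_b hφ k ht hQ0 i u0 b0 c0 fun b hb => nq u0 lu b hb c0 lc
  · intro b hb
    exact step_c hφ (k + 1) ht hQ0 i u0 b c0 fun c hc => nq u0 lu b hb c hc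
  · intro b hb c hc
    exact step_u hφ (k + 2) ht hQ0 i u0 b c fun u hu => nq u hu b hb c hc
  · intro b hb c hc u hu
    refine hw _ ?_
    have := near u hu b hb c hc
    rwa [show rad u b c - t - (rad u0 b0 c0 - t) = rad u b c - rad u0 b0 c0 by ring]

/-- Exterior region: rotations and one straight direction. -/
lemma sphere_case {φ : (Fin 4 → ℝ) → ℝ} (hφ : ContDiff ℝ (⊤ : ℕ∞) φ) (k : ℕ)
    {γ μ t : ℝ} (ht : 0 ≤ t) (i : Fin 3) {u0 b0 c0 Q V r : ℝ}
    (hr : r = rad u0 b0 c0) (hr0 : 0 < r) (hu0 : r ^ 2 ≤ 3 * u0 ^ 2)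
    (hQ : Q = 1 + |r - t|) (hV : 0 ≤ V)
    (hw : ∀ q', |q' - (r - t)| ≤ Q / 2 → V ≤ wgt γ μ q') :
    ENNReal.ofReal (V * enB φ k (PP t i u0 b0 c0)) ≤
      ENNReal.ofReal (201 ^ 3 / ((r / 20) ^ 2 * (Q / 6))) *
      ∫⁻ y : EuclideanSpace ℝ (Fin 3), ENNReal.ofReal (wgt γ μ (‖y‖ - t)) *
        ENNReal.ofReal (enB φ (k + 3) (pt t y)) := by
  have hQ0 : 0 < Q := by rw [hQ]; positivity
  have hL : 0 < r / 20 := by positivity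
  have hr2 : r ^ 2 = u0 ^ 2 + b0 ^ 2 + c0 ^ 2 := by rw [hr, rad_sq]
  obtain ⟨s, hs, hsu⟩ : ∃ s : ℝ, s * s = 1 ∧ s * |u0| = u0 := by
    rcases le_total 0 u0 with h | h
    · exact ⟨1, by norm_num, by rw [abs_of_nonneg h]; ring⟩
    · exact ⟨-1, by norm_num, by rw [abs_of_nonpos h]; ring⟩
  have hsabs : |s| = 1 := by
    have : |s| * |s| = 1 := by rw [abs_mul_abs_self, hs]
    nlinarith [abs_nonneg s]
  set ψ : ℝ → ℝ → ℝ := fun b c => s * Real.sqrt (r ^ 2 - b ^ 2 - c ^ 2) with hψ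
  have hψ0 : ψ b0 c0 = u0 := by
    simp only [hψ]
    rw [show r ^ 2 - b0 ^ 2 - c0 ^ 2 = u0 ^ 2 by linarith, Real.sqrt_sq_eq_abs, hsu]
  have pos : ∀ b ∈ Set.Icc b0 (b0 + r / 20), ∀ c ∈ Set.Icc c0 (c0 + r / 20),
      (r / 20) ^ 2 ≤ r ^ 2 - b ^ 2 - c ^ 2 := by
    intro b hb c hc
    have hb0 : b0 ≤ r := le_of_sq_le_sq (by nlinarith [sq_nonneg u0, sq_nonneg c0]) hr0.le
    have hc0 : c0 ≤ r := le_of_sq_le_sq (by nlinarith [sq_nonneg u0, sq_nonneg b0]) hr0.le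
    have e1 : ∀ a x : ℝ, a ≤ r → x ∈ Set.Icc a (a + r / 20) →
        x ^ 2 ≤ a ^ 2 + r ^ 2 / 10 + r ^ 2 / 400 := by
      intro a x ha hx
      have h1 : (x - a) * a ≤ r / 20 * r := by
        have : (x - a) * a ≤ (x - a) * r := mul_le_mul_of_nonneg_left ha (by linarith [hx.1])
        have : (x - a) * r ≤ r / 20 * r := mul_le_mul_of_nonneg_right (by linarith [hx.2]) hr0.le
        linarith
      have h2 : (x - a) ^ 2 ≤ (r / 20) ^ 2 :=
        pow_le_pow_left₀ (by linarith [hx.1]) (by linarith [hx.2]) 2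
      nlinarith
    have := e1 b0 b hb0 hb
    have := e1 c0 c hc0 hc
    nlinarith
  have habs : ∀ b ∈ Set.Icc b0 (b0 + r / 20), ∀ c ∈ Set.Icc c0 (c0 + r / 20),
      r / 20 ≤ |ψ b c| := by
    intro b hb c hc
    simp only [hψ]
    rw [abs_mul, hsabs, one_mul, abs_of_nonneg (Real.sqrt_nonneg _)]
    exact Real.le_sqrt_of_sq_le (pos b hb c hc)
  have hrad : ∀ b ∈ Set.Icc b0 (b0 + r / 20), ∀ c ∈ Set.Icc c0 (c0 + r / 20),
      rad (ψ b c) b c = r := by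
    intro b hb c hc
    have h1 := pos b hb c hc
    have : ψ b c ^ 2 = r ^ 2 - b ^ 2 - c ^ 2 := by
      simp only [hψ]
      rw [mul_pow, Real.sq_sqrt (by nlinarith [sq_nonneg (r / 20)]), sq s, hs, one_mul]
    rw [rad, this, show r ^ 2 - b ^ 2 - c ^ 2 + b ^ 2 + c ^ 2 = r ^ 2 by ring, Real.sqrt_sq hr0.le]
  have near : ∀ b ∈ Set.Icc b0 (b0 + r / 20), ∀ c ∈ Set.Icc c0 (c0 + r / 20),
      ∀ u ∈ Set.Icc (ψ b c) (ψ b c + Q / 6), |rad u b c - r| ≤ Q / 2 := by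
    intro b hb c hc u hu
    have h1 := rad_lip (ψ b c) b c u b c
    rw [hrad b hb c hc] at h1
    refine h1.trans ?_
    rw [abs_of_nonneg (by linarith [hu.1])]
    simp
    linarith [hu.2]
  have key : ∀ x y : ℝ, (r / 20) ^ 2 ≤ r ^ 2 - x ^ 2 - y ^ 2 →
      HasDerivAt (fun x => s * Real.sqrt (r ^ 2 - x ^ 2 - y ^ 2))
        (-(x / (s * Real.sqrt (r ^ 2 - x ^ 2 - y ^ 2)))) x := by
    intro x y h
    have hp : 0 < r ^ 2 - x ^ 2 - y ^ 2 := lt_of_lt_of_le (by positivity) h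
    have h1 : HasDerivAt (fun x : ℝ => r ^ 2 - x ^ 2 - y ^ 2) (-(2 * x)) x := by
      have := ((hasDerivAt_pow 2 x).const_sub (r ^ 2)).sub_const (y ^ 2)
      simpa using this
    have h2 := (h1.sqrt hp.ne').const_mul s
    refine h2.congr_deriv ?_
    have hs0 : s ≠ 0 := by rintro rfl; simp at hs
    have hq0 : Real.sqrt (r ^ 2 - x ^ 2 - y ^ 2) ≠ 0 := (Real.sqrt_pos.2 hp).ne'
    field_simp
    linear_combination (-x) * hs
  have lc : c0 ∈ Set.Icc c0 (c0 + r / 20) := ⟨le_rfl, by linarith⟩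
  refine chain hφ k γ μ t i hL (by positivity) (by norm_num) hV ψ ?_ ?_ ?_ ?_
  · have := curve_bound hφ k (a := b0) (L := r / 20) (c := 2) hL (by norm_num)
      (p := fun b => PP t i (ψ b c0) b c0)
      (p' := fun b => Pi.single (i.succAbove 0).succ 1 +
        (-(b / ψ b c0)) • Pi.single i.succ 1)
      (cont_PP t i (by fun_prop) continuous_id continuous_const)
      (fun b hb => by
        have := deriv_PP t i (key b c0 (pos b hb c0 lc)) (hasDerivAt_id b) (hasDerivAt_const b c0)
        refine this.congr_deriv ?_
        rw [one_smul, zero_smul, add_zero, add_comm])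
      (fun b hb => by
        have := ctl_rot (x := PP t i (ψ b c0) b c0) i (i.succAbove 0)
          (Fin.succAbove_ne i 0).symm hL (by rw [PP_u]; exact habs b hb c0 lc)
        rwa [PP_u, PP_b] at this)
    rw [hψ0] at this
    norm_num at this ⊢
    exact this
  · intro b hb
    have := curve_bound hφ (k + 1) (a := c0) (L := r / 20) (c := 2) hL (by norm_num)
      (p := fun c => PP t i (ψ b c) b c)
      (p' := fun c => Pi.single (i.succAbove 1).succ 1 +
        (-(c / ψ b c)) • Pi.single i.succ 1)
      (cont_PP t i (by fun_prop) continuous_const continuous_id)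
      (fun c hc => by
        have h1 := key c b (by linarith [pos b hb c hc])
        have h2 : (fun x => s * Real.sqrt (r ^ 2 - x ^ 2 - b ^ 2)) = fun x => ψ b x := by
          funext x; simp only [hψ]; congr 2; ring
        have h3 : s * Real.sqrt (r ^ 2 - c ^ 2 - b ^ 2) = ψ b c := congrFun h2 c
        rw [h2, h3] at h1
        have := deriv_PP t i h1 (hasDerivAt_const c b) (hasDerivAt_id c)
        refine this.congr_deriv ?_
        rw [one_smul, zero_smul, add_zero, add_comm])
      (fun c hc => by
        have := ctl_rot (x := PP t i (ψ b c) b c) i (i.succAbove 1)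
          (Fin.succAbove_ne i 1).symm hL (by rw [PP_u]; exact habs b hb c hc)
        rwa [PP_u, PP_c] at this)
    norm_num at this ⊢
    exact this
  · intro b hb c hc
    refine step_u hφ (k + 2) ht hQ0 i (ψ b c) b c fun u hu => ?_
    have h1 := near b hb c hc u hu
    have h2 := abs_sub_abs_le_abs_sub (r - t) (rad u b c - t)
    rw [show r - t - (rad u b c - t) = -(rad u b c - r) by ring, abs_neg] at h2
    linarith
  · intro b hb c hc u hu
    refine hw _ ?_
    have := near b hb c hc u hu
    rwa [show rad u b c - t - (r - t) = rad u b c - r by ring]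

lemma combined {φ : (Fin 4 → ℝ) → ℝ} (hφ : ContDiff ℝ (⊤ : ℕ∞) φ) (k : ℕ) {γ μ t : ℝ}
    (ht : 0 ≤ t) (y : EuclideanSpace ℝ (Fin 3)) {R Q V A : ℝ}
    (hQ : Q = 1 + |‖y‖ - t|) (hR : R = 1 + t + |‖y‖ - t|) (hV : 0 ≤ V) (hA : 0 ≤ A)
    (hw : ∀ q', |q' - (‖y‖ - t)| ≤ Q / 2 → V ≤ wgt γ μ q')
    (hI : ∫⁻ y : EuclideanSpace ℝ (Fin 3), ENNReal.ofReal (wgt γ μ (‖y‖ - t)) *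
        ENNReal.ofReal (enB φ (k + 3) (pt t y)) ≤ ENNReal.ofReal A) :
    V * enB φ k (pt t y) * (R ^ 2 * Q) ≤ 201 ^ 3 * 86400 * A := by
  have hQ0 : 0 < Q := by rw [hQ]; positivity
  have hR0 : 0 < R := by rw [hR]; positivity
  have fin : ∀ X : ℝ, 0 ≤ X → ENNReal.ofReal (V * enB φ k (pt t y)) ≤ ENNReal.ofReal X *
      ∫⁻ y : EuclideanSpace ℝ (Fin 3), ENNReal.ofReal (wgt γ μ (‖y‖ - t)) *
        ENNReal.ofReal (enB φ (k + 3) (pt t y)) → V * enB φ k (pt t y) ≤ X * A := by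
    intro X hX h
    have h1 : ENNReal.ofReal (V * enB φ k (pt t y)) ≤ ENNReal.ofReal (X * A) := by
      rw [ENNReal.ofReal_mul hX]
      exact h.trans (by gcongr)
    exact (ENNReal.ofReal_le_ofReal_iff (by positivity)).1 h1
  by_cases hc : R ≤ 6 * Q
  · have h1 := straight_case hφ k (γ := γ) (μ := μ) ht 0 (u0 := y 0)
      (b0 := y (Fin.succAbove 0 0)) (c0 := y (Fin.succAbove 0 1)) (Q := Q) (V := V)
      (by rw [← norm_eq_rad 0, hQ]) hV (by rw [← norm_eq_rad 0]; exact hw)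
    rw [← pt_eq t 0 y] at h1
    have h2 := fin _ (by positivity) h1
    calc V * enB φ k (pt t y) * (R ^ 2 * Q) ≤
          201 ^ 3 / ((Q / 6) ^ 2 * (Q / 6)) * A * ((6 * Q) ^ 2 * Q) := by gcongr
      _ = 201 ^ 3 * 7776 * A := by field_simp; ring
      _ ≤ _ := by nlinarith
  · push Not at hc
    have hr6 : R ≤ 6 * ‖y‖ := by
      by_contra hcon
      push Not at hcon
      have n0 := norm_nonneg y
      rcases le_total t ‖y‖ with h | h
      · rw [abs_of_nonneg (by linarith)] at hQ hR
        linarith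
      · rw [abs_of_nonpos (by linarith)] at hQ hR
        linarith
    have hr0 : 0 < ‖y‖ := by linarith
    obtain ⟨i, hi⟩ : ∃ i : Fin 3, ∀ j, |y j| ≤ |y i| := Finite.exists_max fun j => |y j|
    have hi2 : ∀ j, y j ^ 2 ≤ y i ^ 2 := fun j => sq_le_sq.2 (hi j)
    have h1 := sphere_case hφ k (γ := γ) (μ := μ) ht i (u0 := y i)
      (b0 := y (Fin.succAbove i 0)) (c0 := y (Fin.succAbove i 1)) (Q := Q) (V := V) (r := ‖y‖)
      (norm_eq_rad i y) hr0
      (by rw [norm_eq_rad i, rad_sq]; linarith [hi2 (i.succAbove 0), hi2 (i.succAbove 1)])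
      hQ hV hw
    rw [← pt_eq t i y] at h1
    have h2 := fin _ (by positivity) h1
    calc V * enB φ k (pt t y) * (R ^ 2 * Q) ≤
          201 ^ 3 / ((‖y‖ / 20) ^ 2 * (Q / 6)) * A * ((6 * ‖y‖) ^ 2 * Q) := by gcongr
      _ = 201 ^ 3 * 86400 * A := by field_simp; ring

lemma grad_le_enB (φ : (Fin 4 → ℝ) → ℝ) {k n : ℕ} (hk : k ≤ n) (ι : Fin k → LIdx)
    (x : Fin 4 → ℝ) : gradNorm (applyVec ι φ) x ^ 2 ≤ enB φ n x := by
  refine (grad_sq_le _ _).trans ?_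
  refine le_trans (b := enL φ k x) ?_ ?_
  · exact Finset.single_le_sum (f := fun ι : Fin k → LIdx => dsq (applyVec ι φ) x)
      (fun _ _ => dsq_nonneg _ _) (Finset.mem_univ ι)
  · exact Finset.single_le_sum (f := fun m => enL φ m x)
      (fun _ _ => enL_nonneg _ _ _) (Finset.mem_range.2 (by omega))

lemma final_sq {g ε R Q K W B s : ℝ} (hR : 0 < R) (hQ : 0 < Q) (hε : 0 < ε) (hK : 0 < K)
    (hg : g ^ 2 ≤ B) (hW : W = Q ^ s / 4) (h : W * B * (R ^ 2 * Q) ≤ K * ε ^ 2) :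
    g ≤ Real.sqrt (4 * K) * ε * R⁻¹ * Q ^ (-((1 + s) / 2)) := by
  have hp : 0 < Q ^ s := by positivity
  refine le_of_sq_le_sq ?_ (by positivity)
  have e0 : Q * Q ^ s = Q ^ (1 + s) := by rw [Real.rpow_add hQ, Real.rpow_one]
  have e : (Q ^ (-((1 + s) / 2))) ^ 2 = (Q * Q ^ s)⁻¹ := by
    rw [← Real.rpow_natCast, ← Real.rpow_mul hQ.le, e0, ← Real.rpow_neg hQ.le]
    congr 1; push_cast; ring
  rw [mul_pow, mul_pow, mul_pow, Real.sq_sqrt (by positivity), e]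
  refine hg.trans ?_
  rw [hW] at h
  have : 4 * K * ε ^ 2 * R⁻¹ ^ 2 * (Q * Q ^ s)⁻¹ = (4 * (K * ε ^ 2)) / (Q ^ s * (R ^ 2 * Q)) := by
    field_simp
  rw [this, le_div_iff₀ (by positivity)]
  linarith

/-- Weighted Klainerman–Sobolev decay estimate: if the weighted `L²` norms of `∂ Z^I φ` for
`|I| ≤ N` are at most `ε` at each time `t ∈ [0,T)`, and `φ(·,t)` is Schwartz in `x`, then for
`|I| ≤ N - 3`, `|∂ Z^I φ| ≲ ε (1+t+|q|)⁻¹ (1+|q|)^{-1-γ}` when `q > 0` and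
`≲ ε (1+t+|q|)⁻¹ (1+|q|)^{-1/2}` when `q < 0`, where `q = |x| - t`. -/
theorem weighted_decay_estimate
    (N : ℕ) (hN : 4 ≤ N) (γ μ : ℝ)
    (hγ : γ ∈ Set.Ioo (0 : ℝ) (1 / 2)) (hμ : μ ∈ Set.Ioo (0 : ℝ) (1 / 2)) :
    ∃ C > (0 : ℝ), ∀ T > (0 : ℝ), ∀ ε > (0 : ℝ), ∀ φ : (Fin 4 → ℝ) → ℝ,
      ContDiff ℝ (⊤ : ℕ∞) φ →
      (∀ t : ℝ, 0 ≤ t → t < T →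
        ∃ ψ : SchwartzMap (EuclideanSpace ℝ (Fin 3)) ℝ, ∀ y, ψ y = φ (pt t y)) →
      (∀ t : ℝ, 0 ≤ t → t < T →
        ∑ k : Fin (N + 1), ∑ ι : Fin (k : ℕ) → LIdx,
          eLpNorm (fun y : EuclideanSpace ℝ (Fin 3) =>
            Real.sqrt (wgt γ μ (‖y‖ - t)) * gradNorm (applyVec ι φ) (pt t y)) 2 volume
          ≤ ENNReal.ofReal ε) →
      ∀ k : ℕ, k ≤ N - 3 → ∀ ι : Fin k → LIdx,
        ∀ (t : ℝ) (y : EuclideanSpace ℝ (Fin 3)), 0 ≤ t → t < T →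
          (0 < ‖y‖ - t →
            gradNorm (applyVec ι φ) (pt t y) ≤
              C * ε * (1 + t + |‖y‖ - t|)⁻¹ * (1 + |‖y‖ - t|) ^ (-(1 + γ))) ∧
          (‖y‖ - t < 0 →
            gradNorm (applyVec ι φ) (pt t y) ≤
              C * ε * (1 + t + |‖y‖ - t|)⁻¹ * (1 + |‖y‖ - t|) ^ (-(1 / 2) : ℝ)) := by
  obtain ⟨A, hAdef⟩ : ∃ A : ℝ, A = ∑ m ∈ Finset.range (N + 1), ∑ _ι : Fin m → LIdx, (4 : ℝ) :=
    ⟨_, rfl⟩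
  have hA : 0 ≤ A := by
    rw [hAdef]
    exact Finset.sum_nonneg fun _ _ => Finset.sum_nonneg fun _ _ => by norm_num
  have hKpos : (0 : ℝ) < 201 ^ 3 * 86400 * (A + 1) := by positivity
  refine ⟨Real.sqrt (4 * (201 ^ 3 * 86400 * (A + 1))), by positivity, ?_⟩
  intro T _ ε hε φ hφ _ hyp k hk ι t y ht htT
  have hI := energy_bound hφ hε (hyp t ht htT)
  rw [← hAdef] at hI
  obtain ⟨n, rfl⟩ : ∃ n, N = n + 3 := ⟨N - 3, by omega⟩
  have hk' : k ≤ n := by omega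
  have hg := grad_le_enB φ hk' ι (pt t y)
  have hQ0 : 0 < 1 + |‖y‖ - t| := by positivity
  have hR0 : 0 < 1 + t + |‖y‖ - t| := by positivity
  have mono : 201 ^ 3 * 86400 * (A * ε ^ 2) ≤ 201 ^ 3 * 86400 * (A + 1) * ε ^ 2 := by
    linarith [sq_nonneg ε]
  constructor
  · intro hq
    have h1 := combined hφ n (γ := γ) (μ := μ) ht y rfl rfl
      (V := (1 + |‖y‖ - t|) ^ (1 + 2 * γ) / 4) (by positivity) (by positivity)
      (fun q' hq' => wgt_ge hγ hq hq') hI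
    have h2 := final_sq hR0 hQ0 hε hKpos hg rfl (h1.trans mono)
    rwa [show (1 + (1 + 2 * γ)) / 2 = 1 + γ by ring] at h2
  · intro hq
    have h1 := combined hφ n (γ := γ) (μ := μ) ht y rfl rfl
      (V := (1 + |‖y‖ - t|) ^ (0 : ℝ) / 4) (by positivity) (by positivity)
      (fun q' _ => by
        have := wgt_ge_one γ μ q'
        rw [Real.rpow_zero]; linarith) hI
    have h2 := final_sq hR0 hQ0 hε hKpos hg rfl (h1.trans mono)
    rwa [show ((1 : ℝ) + 0) / 2 = 1 / 2 by ring] at h2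
end

section
/- Fix γ ∈ (0,1/2). There is a constant C = C(γ) > 0 with the following property. Let ε > 0 and let φ : ℝ³ × [0,∞) → ℝ be continuously differentiable, with space-time gradient ∂φ, such that: (i) |∂φ(x,s)| ≤ ε (1 + s + |x|)^{-1} (1 + (|x| − s))^{-1-γ} for all (x,s) with |x| ≥ s; (ii) |∂φ(x,s)| ≤ ε (1 + s + |x|)^{-1} (1 + (s − |x|))^{-1/2} for all (x,s) with |x| < s; (iii) |φ(x,0)| ≤ ε (1 + |x|)^{-1-γ} for all x. Then for every (x,t) with t ≥ 0, setting q := |x| − t: |φ(x,t)| ≤ C ε (1 + t + |q|)^{-1} (1 + |q|)^{-γ} if q ≥ 0, and |φ(x,t)| ≤ C ε (1 + t + |q|)^{-1} (1 + |q|)^{1/2} if q < 0. -/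
/-- The pointwise norm `|∂φ| = max` of the four space-time partial derivatives of a function
`φ : ℝ³ × ℝ → ℝ`. -/
noncomputable def gradNormP (φ : EuclideanSpace ℝ (Fin 3) × ℝ → ℝ)
    (p : EuclideanSpace ℝ (Fin 3) × ℝ) : ℝ :=
  max |fderiv ℝ φ p (0, 1)|
    (Finset.univ.sup' Finset.univ_nonempty
      (fun i : Fin 3 => |fderiv ℝ φ p (EuclideanSpace.single i 1, 0)|))


lemma aux_outer (γ ε R : ℝ) (hγ : 0 < γ) (hR : 0 ≤ R) (hε : 0 < ε) (g g' : ℝ → ℝ)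
    (hg : ∀ s, HasDerivAt g (g' s) s)
    (h0 : |g 0| ≤ ε * (1 + R) ^ (-(1 + γ)))
    (h1 : ∀ s, 0 ≤ s → 2 * s ≤ R → |g' s| ≤ 4 * (ε * (1 + R)⁻¹ * (1 + (R - 2 * s)) ^ (-(1 + γ))))
    (t : ℝ) (ht : 0 ≤ t) (htR : 2 * t ≤ R) :
    |g t| ≤ ε * (1 + R)⁻¹ * ((1 + 2 / γ) * (1 + (R - 2 * t)) ^ (-γ)) := by
  have hK : 0 < ε * (1 + R)⁻¹ := by positivity
  have key : ‖g t‖ ≤ ε * (1 + R)⁻¹ * ((1 + R) ^ (-γ) + 2 / γ * (1 + (R - 2 * t)) ^ (-γ)) := by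
    refine image_norm_le_of_norm_deriv_right_le_deriv_boundary' (a := 0) (b := t) (f := g) (f' := g')
      (B := fun s => ε * (1 + R)⁻¹ * ((1 + R) ^ (-γ) + 2 / γ * (1 + (R - 2 * s)) ^ (-γ)))
      (B' := fun s => 4 * (ε * (1 + R)⁻¹ * (1 + (R - 2 * s)) ^ (-(1 + γ))))
      (fun s _ => (hg s).continuousAt.continuousWithinAt)
      (fun s _ => (hg s).hasDerivWithinAt) ?_ ?_ ?_ ?_ ⟨ht, le_rfl⟩
    · have e : (1 + R) ^ (-(1 + γ)) = (1 + R)⁻¹ * (1 + R) ^ (-γ) := by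
        rw [neg_add, Real.rpow_add (by linarith), Real.rpow_neg_one]
      rw [e] at h0
      have : 0 ≤ 2 / γ * (1 + (R - 2 * 0)) ^ (-γ) := by
        have : 0 ≤ 1 + (R - 2 * 0) := by linarith
        positivity
      rw [Real.norm_eq_abs]
      nlinarith
    · refine ContinuousOn.mul continuousOn_const (ContinuousOn.add continuousOn_const
        (ContinuousOn.mul continuousOn_const (ContinuousOn.rpow_const (by fun_prop) ?_)))
      intro s hs
      left
      have := hs.2
      linarith
    · intro s hs
      have hs2 := hs.2
      have hp : 0 < 1 + (R - 2 * s) := by linarith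
      have hd : HasDerivAt (fun s : ℝ => 1 + (R - 2 * s)) (-2) s := by
        have := (((hasDerivAt_id s).const_mul 2).const_sub R).const_add 1
        simpa using this
      have h2 := (((hd.rpow_const (p := -γ) (Or.inl hp.ne')).const_mul (2 / γ)).const_add
        ((1 + R) ^ (-γ))).const_mul (ε * (1 + R)⁻¹)
      refine (h2.congr_deriv ?_).hasDerivWithinAt
      rw [show -γ - 1 = -(1 + γ) by ring]
      field_simp
      ring
    · intro s hs
      exact h1 s hs.1 (by linarith [hs.2])
  rw [Real.norm_eq_abs] at key
  refine key.trans (mul_le_mul_of_nonneg_left ?_ hK.le)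
  have : (1 + R) ^ (-γ) ≤ (1 + (R - 2 * t)) ^ (-γ) :=
    Real.rpow_le_rpow_of_nonpos (by linarith) (by linarith) (by linarith)
  linarith

lemma aux_inner (ε R A : ℝ) (hR : 0 ≤ R) (hA : 0 ≤ A) (hε : 0 < ε) (g g' : ℝ → ℝ)
    (hg : ∀ s, HasDerivAt g (g' s) s)
    (h0 : |g (R / 2)| ≤ ε * (1 + R)⁻¹ * A)
    (h1 : ∀ s, R / 2 ≤ s → s ≤ R →
      |g' s| ≤ 4 * (ε * (1 + R)⁻¹ * (1 + (2 * s - R)) ^ (-(1 / 2) : ℝ)))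
    (t : ℝ) (ht : R / 2 ≤ t) (htR : t ≤ R) :
    |g t| ≤ ε * (1 + R)⁻¹ * ((A + 4) * (1 + (2 * t - R)) ^ ((1 / 2) : ℝ)) := by
  have hK : 0 < ε * (1 + R)⁻¹ := by positivity
  have key : ‖g t‖ ≤ ε * (1 + R)⁻¹ * (A + 4 * (1 + (2 * t - R)) ^ ((1 / 2) : ℝ)) := by
    refine image_norm_le_of_norm_deriv_right_le_deriv_boundary' (a := R / 2) (b := t)
      (f := g) (f' := g')
      (B := fun s => ε * (1 + R)⁻¹ * (A + 4 * (1 + (2 * s - R)) ^ ((1 / 2) : ℝ)))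
      (B' := fun s => 4 * (ε * (1 + R)⁻¹ * (1 + (2 * s - R)) ^ (-(1 / 2) : ℝ)))
      (fun s _ => (hg s).continuousAt.continuousWithinAt)
      (fun s _ => (hg s).hasDerivWithinAt) ?_ ?_ ?_ ?_ ⟨ht, le_rfl⟩
    · rw [Real.norm_eq_abs]
      refine h0.trans (mul_le_mul_of_nonneg_left ?_ hK.le)
      have : 0 ≤ (1 + (2 * (R / 2) - R)) ^ ((1 / 2) : ℝ) := Real.rpow_nonneg (by linarith) _
      linarith
    · refine ContinuousOn.mul continuousOn_const (ContinuousOn.add continuousOn_const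
        (ContinuousOn.mul continuousOn_const (ContinuousOn.rpow_const (by fun_prop) ?_)))
      intro s hs
      left
      have := hs.1
      linarith
    · intro s hs
      have hs2 := hs.1
      have hp : 0 < 1 + (2 * s - R) := by linarith
      have hd : HasDerivAt (fun s : ℝ => 1 + (2 * s - R)) 2 s := by
        have := (((hasDerivAt_id s).const_mul 2).sub_const R).const_add 1
        simpa using this
      have h2 := (((hd.rpow_const (p := 1 / 2) (Or.inl hp.ne')).const_mul 4).const_add
        A).const_mul (ε * (1 + R)⁻¹)
      refine (h2.congr_deriv ?_).hasDerivWithinAt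
      rw [show (1 / 2 : ℝ) - 1 = -(1 / 2) by norm_num]
      ring
    · intro s hs
      exact h1 s hs.1 (by linarith [hs.2])
  rw [Real.norm_eq_abs] at key
  refine key.trans (mul_le_mul_of_nonneg_left ?_ hK.le)
  have : 1 ≤ (1 + (2 * t - R)) ^ ((1 / 2) : ℝ) :=
    Real.one_le_rpow (by linarith) (by norm_num)
  nlinarith

lemma aux_grad (φ : EuclideanSpace ℝ (Fin 3) × ℝ → ℝ) (p : EuclideanSpace ℝ (Fin 3) × ℝ)
    (w : EuclideanSpace ℝ (Fin 3)) (hw : ‖w‖ = 1) :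
    |fderiv ℝ φ p (-w, 1)| ≤ 4 * gradNormP φ p := by
  have hi : ∀ i : Fin 3, |fderiv ℝ φ p (EuclideanSpace.single i 1, 0)| ≤ gradNormP φ p :=
    fun i => le_max_of_le_right (Finset.le_sup'
      (fun i : Fin 3 => |fderiv ℝ φ p (EuclideanSpace.single i 1, 0)|) (Finset.mem_univ i))
  have ht : |fderiv ℝ φ p (0, 1)| ≤ gradNormP φ p := le_max_left _ _
  have hwi : ∀ i : Fin 3, |w i| ≤ 1 := fun i => by
    have := PiLp.norm_apply_le w i
    rwa [hw, Real.norm_eq_abs] at this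
  have e : ((-w, 1) : EuclideanSpace ℝ (Fin 3) × ℝ) = (0, 1)
      - w 0 • (EuclideanSpace.single 0 1, 0) - w 1 • (EuclideanSpace.single 1 1, 0)
      - w 2 • (EuclideanSpace.single 2 1, 0) := by
    refine Prod.ext ?_ ?_
    · ext i
      fin_cases i <;> simp
    · simp
  rw [e, map_sub, map_sub, map_sub, map_smul, map_smul, map_smul]
  simp only [smul_eq_mul]
  have hm : ∀ i : Fin 3, |w i * fderiv ℝ φ p (EuclideanSpace.single i 1, 0)| ≤ gradNormP φ p := by
    intro i
    rw [abs_mul]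
    nlinarith [hi i, hwi i, abs_nonneg (fderiv ℝ φ p (EuclideanSpace.single i 1, 0))]
  have a0 := abs_le.1 (hm 0)
  have a1 := abs_le.1 (hm 1)
  have a2 := abs_le.1 (hm 2)
  have a3 := abs_le.1 ht
  rw [abs_le]
  constructor <;> linarith [a0.1, a0.2, a1.1, a1.2, a2.1, a2.2, a3.1, a3.2]

/-- Integrating a decaying gradient bound from the initial hyperplane along incoming null
lines: if `|∂φ| ≤ ε (1+s+|x|)⁻¹ (1+(|x|-s))^{-1-γ}` for `|x| ≥ s ≥ 0`,
`|∂φ| ≤ ε (1+s+|x|)⁻¹ (1+(s-|x|))^{-1/2}` for `0 ≤ s > |x|`, and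
`|φ(x,0)| ≤ ε (1+|x|)^{-1-γ}`, then `|φ| ≤ C ε (1+t+|q|)⁻¹ (1+|q|)^{-γ}` for `q ≥ 0` and
`|φ| ≤ C ε (1+t+|q|)⁻¹ (1+|q|)^{1/2}` for `q < 0`, where `q = |x| - t`. -/
theorem decay_from_gradient_bound
    (γ : ℝ) (hγ0 : 0 < γ) (hγ : γ < 1 / 2) :
    ∃ C > (0 : ℝ), ∀ ε > (0 : ℝ), ∀ φ : EuclideanSpace ℝ (Fin 3) × ℝ → ℝ,
      ContDiff ℝ 1 φ →
      (∀ (x : EuclideanSpace ℝ (Fin 3)) (s : ℝ), 0 ≤ s → s ≤ ‖x‖ →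
        gradNormP φ (x, s) ≤ ε * (1 + s + ‖x‖)⁻¹ * (1 + (‖x‖ - s)) ^ (-(1 + γ))) →
      (∀ (x : EuclideanSpace ℝ (Fin 3)) (s : ℝ), 0 ≤ s → ‖x‖ < s →
        gradNormP φ (x, s) ≤ ε * (1 + s + ‖x‖)⁻¹ * (1 + (s - ‖x‖)) ^ (-(1 / 2) : ℝ)) →
      (∀ x : EuclideanSpace ℝ (Fin 3), |φ (x, 0)| ≤ ε * (1 + ‖x‖) ^ (-(1 + γ))) →
      ∀ (x : EuclideanSpace ℝ (Fin 3)) (t : ℝ), 0 ≤ t →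
        (0 ≤ ‖x‖ - t →
          |φ (x, t)| ≤ C * ε * (1 + t + |‖x‖ - t|)⁻¹ * (1 + |‖x‖ - t|) ^ (-γ)) ∧
        (‖x‖ - t < 0 →
          |φ (x, t)| ≤ C * ε * (1 + t + |‖x‖ - t|)⁻¹ * (1 + |‖x‖ - t|) ^ ((1 / 2) : ℝ)) := by
  refine ⟨2 * (5 + 2 / γ), by positivity, ?_⟩
  intro ε hε φ hφ H1 H2 H0 x t ht
  obtain ⟨w, hw, hxw⟩ : ∃ w : EuclideanSpace ℝ (Fin 3), ‖w‖ = 1 ∧ x = ‖x‖ • w := by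
    by_cases hx : x = 0
    · exact ⟨EuclideanSpace.single 0 1, by simp, by simp [hx]⟩
    · have : ‖x‖ ≠ 0 := norm_ne_zero_iff.2 hx
      refine ⟨‖x‖⁻¹ • x, ?_, ?_⟩
      · rw [norm_smul, norm_inv, norm_norm, inv_mul_cancel₀ this]
      · rw [smul_smul, mul_inv_cancel₀ this, one_smul]
  have hr : 0 ≤ ‖x‖ := norm_nonneg x
  generalize ‖x‖ = r at *
  subst hxw
  obtain ⟨R, hRdef⟩ : ∃ R, R = t + r := ⟨_, rfl⟩
  have hR : 0 ≤ R := by linarith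
  have hn : ∀ s, s ≤ R → ‖(R - s) • w‖ = R - s := fun s hs => by
    rw [norm_smul, hw, mul_one, Real.norm_eq_abs, abs_of_nonneg (by linarith)]
  have hg : ∀ s, HasDerivAt (fun s : ℝ => φ ((R - s) • w, s))
      (fderiv ℝ φ ((R - s) • w, s) (-w, 1)) s := by
    intro s
    have hc : HasDerivAt (fun s : ℝ => ((R - s) • w, s)) (-w, 1) s := by
      have h1 : HasDerivAt (fun s : ℝ => (R - s) • w) (-w) s := by
        simpa using ((hasDerivAt_id s).const_sub R).smul_const w
      exact h1.prodMk (hasDerivAt_id s)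
    have hf : HasFDerivAt φ (fderiv ℝ φ ((R - s) • w, s)) ((fun s : ℝ => ((R - s) • w, s)) s) :=
      ((hφ.differentiable (by norm_num)) ((R - s) • w, s)).hasFDerivAt
    exact HasFDerivAt.comp_hasDerivAt (f := fun s : ℝ => ((R - s) • w, s)) s hf hc
  have hg0 : |(fun s : ℝ => φ ((R - s) • w, s)) 0| ≤ ε * (1 + R) ^ (-(1 + γ)) := by
    have := H0 ((R - 0) • w)
    rw [hn 0 hR, sub_zero] at this
    simpa using this
  have hd1 : ∀ s, 0 ≤ s → 2 * s ≤ R → |fderiv ℝ φ ((R - s) • w, s) (-w, 1)| ≤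
      4 * (ε * (1 + R)⁻¹ * (1 + (R - 2 * s)) ^ (-(1 + γ))) := by
    intro s hs hsR
    have hns := hn s (by linarith)
    have := H1 ((R - s) • w) s hs (by rw [hns]; linarith)
    rw [hns, show 1 + s + (R - s) = 1 + R by ring, show R - s - s = R - 2 * s by ring] at this
    linarith [aux_grad φ ((R - s) • w, s) w hw]
  have hd2 : ∀ s, R / 2 ≤ s → s ≤ R → |fderiv ℝ φ ((R - s) • w, s) (-w, 1)| ≤
      4 * (ε * (1 + R)⁻¹ * (1 + (2 * s - R)) ^ (-(1 / 2) : ℝ)) := by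
    intro s hs hsR
    rcases hs.eq_or_lt with h | h
    · have := hd1 s (by linarith) (by linarith)
      rw [show R - 2 * s = 0 by linarith, add_zero, Real.one_rpow] at this
      rwa [show 2 * s - R = 0 by linarith, add_zero, Real.one_rpow]
    · have hns := hn s hsR
      have := H2 ((R - s) • w) s (by linarith) (by rw [hns]; linarith)
      rw [hns, show 1 + s + (R - s) = 1 + R by ring,
        show s - (R - s) = 2 * s - R by ring] at this
      linarith [aux_grad φ ((R - s) • w, s) w hw]
  have hgt : φ ((R - t) • w, t) = φ (r • w, t) := by
    simp [hRdef]
  have outer := aux_outer γ ε R hγ0 hR hε _ _ hg hg0 hd1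
  have fin : ∀ D P M X : ℝ, 0 < D → D ≤ 2 * (1 + R) → 0 ≤ P → 0 ≤ M → M ≤ 5 + 2 / γ →
      X ≤ ε * (1 + R)⁻¹ * (M * P) → X ≤ 2 * (5 + 2 / γ) * ε * D⁻¹ * P := by
    intro D P M X hD hDR hP hM hM' hX
    have h1 : (1 + R)⁻¹ ≤ 2 * D⁻¹ := by
      rw [← div_eq_mul_inv, inv_eq_one_div, div_le_div_iff₀ (by linarith) hD]
      linarith
    calc X ≤ ε * (1 + R)⁻¹ * (M * P) := hX
      _ ≤ ε * (2 * D⁻¹) * ((5 + 2 / γ) * P) := by gcongr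
      _ = _ := by ring
  have hγp : 0 < 2 / γ := by positivity
  constructor
  · intro hq
    rw [abs_of_nonneg hq]
    have h := outer t ht (by linarith)
    rw [hgt, show R - 2 * t = r - t by linarith] at h
    exact fin _ _ _ _ (by linarith) (by linarith) (Real.rpow_nonneg (by linarith) _)
      (by linarith) (by linarith) h
  · intro hq
    rw [abs_of_neg hq]
    have h0 := outer (R / 2) (by linarith) (by linarith)
    rw [show R - 2 * (R / 2) = 0 by ring, add_zero, Real.one_rpow, mul_one] at h0
    have h := aux_inner ε R (1 + 2 / γ) hR (by linarith) hε _ _ hg h0 hd2 t (by linarith)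
      (by linarith)
    rw [hgt, show 2 * t - R = -(r - t) by linarith] at h
    exact fin _ _ _ _ (by linarith) (by linarith) (Real.rpow_nonneg (by linarith) _)
      (by linarith) (by linarith) h
end
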